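/- (Beltrán–Felipe) Let m and n be coprime integers with m > 1 and n > 1, and let G be a finite group whose set of conjugacy class sizes is N(G) = {1, m, n, mn}. Then G is nilpotent, and m and n are powers of two distinct primes. -/

import Mathlib

/-- The index of an element `x` of a group `G`: the size of its conjugacy class,
`|x^G| = |G : C_G(x)|`. -/
noncomputable def classSize {G : Type*} [Group G] (x : G) : ℕ :=
  (Subgroup.centralizer {x}).index

/-- The `p`-index of `x`: the `p`-part of `|x^G|`. -/
noncomputable def pIndex (p : ℕ) {G : Type*} [Group G] (x : G) : ℕ :=
  p ^ ((classSize x).factorization p)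

/-- `G` is `p`-index extremal (`G ∈ R(p)`): the set `N(G)_p` of `p`-indices of elements of `G`
contains exactly one nontrivial element. -/
def IsPIndexExtremal (p : ℕ) (G : Type*) [Group G] : Prop :=
  ∃! a : ℕ, a ≠ 1 ∧ ∃ x : G, pIndex p x = a

/-- `x` is a `p`-element: its order is a power of `p`. -/
def IsPElement (p : ℕ) {G : Type*} [Group G] (x : G) : Prop :=
  ∃ k : ℕ, orderOf x = p ^ k


namespace BF

open Subgroup

variable {G : Type*} [Group G]

/-- centralizer of an element -/
abbrev Cn (g : G) : Subgroup G := Subgroup.centralizer {g}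

lemma mem_Cn {g k : G} : k ∈ Cn g ↔ k * g = g * k := Subgroup.mem_centralizer_singleton_iff

lemma mem_Cn' {g k : G} : k ∈ Cn g ↔ Commute k g := Subgroup.mem_centralizer_singleton_iff

lemma mem_Cn_comm {g k : G} : k ∈ Cn g ↔ g ∈ Cn k := by
  rw [mem_Cn', mem_Cn', Commute.symm_iff]

lemma self_mem_Cn (g : G) : g ∈ Cn g := mem_Cn.2 rfl

lemma classSize_def (g : G) : classSize g = (Cn g).index := rfl

lemma center_le_Cn (g : G) : center G ≤ Cn g := fun z hz => by
  rw [mem_Cn]; exact ((mem_center_iff.1 hz) g).symm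

lemma mem_center_iff_Cn {g : G} : g ∈ center G ↔ Cn g = ⊤ := by
  rw [mem_center_iff, eq_top_iff]
  exact ⟨fun h k _ => mem_Cn.2 (h k), fun h k => mem_Cn.1 (h (mem_top k))⟩

lemma classSize_eq_one {g : G} : classSize g = 1 ↔ g ∈ center G := by
  rw [classSize_def, index_eq_one, mem_center_iff_Cn]

lemma classSize_pos [Finite G] (g : G) : 0 < classSize g :=
  Nat.pos_of_ne_zero FiniteIndex.index_ne_zero

lemma conj_mem_Cn {g h k : G} : k * h * k⁻¹ ∈ Cn (k * g * k⁻¹) ↔ h ∈ Cn g := by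
  rw [mem_Cn, mem_Cn]
  constructor
  · intro H
    have := congrArg (fun t => k⁻¹ * t * k) H
    simpa [mul_assoc] using this
  · intro H
    simp only [mul_assoc, inv_mul_cancel_left]
    rw [← mul_assoc h, H, mul_assoc]

lemma Cn_conj (g k : G) : Cn (k * g * k⁻¹) = (Cn g).map (MulAut.conj k).toMonoidHom := by
  ext x
  rw [mem_map]
  constructor
  · intro hx
    refine ⟨k⁻¹ * x * k, ?_, by simp [mul_assoc]⟩
    rw [← conj_mem_Cn (k := k)]
    simpa [mul_assoc] using hx
  · rintro ⟨y, hy, rfl⟩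
    exact conj_mem_Cn.2 hy

lemma classSize_conj (g k : G) : classSize (k * g * k⁻¹) = classSize g := by
  rw [classSize_def, Cn_conj]
  exact index_map_of_bijective (MulAut.conj k).bijective _

lemma conj_mem_center {g k : G} : k * g * k⁻¹ ∈ center G ↔ g ∈ center G := by
  rw [← classSize_eq_one, classSize_conj, classSize_eq_one]

lemma orderOf_conj' (g k : G) : orderOf (k * g * k⁻¹) = orderOf g :=
  MulEquiv.orderOf_eq (MulAut.conj k) g

lemma isP_conj {p : ℕ} {g : G} (k : G) (h : IsPElement p g) : IsPElement p (k * g * k⁻¹) := by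
  obtain ⟨a, ha⟩ := h
  exact ⟨a, by rw [orderOf_conj', ha]⟩

lemma isP_of_pow {p : ℕ} (hp : p.Prime) {g : G} {k : ℕ} (h : g ^ p ^ k = 1) : IsPElement p g := by
  obtain ⟨a, _, ha⟩ := (Nat.dvd_prime_pow hp).1 (orderOf_dvd_of_pow_eq_one h)
  exact ⟨a, ha⟩

lemma isP_inv {p : ℕ} {g : G} (h : IsPElement p g) : IsPElement p g⁻¹ := by
  obtain ⟨a, ha⟩ := h
  exact ⟨a, by rw [orderOf_inv, ha]⟩

lemma isP_one (p : ℕ) : IsPElement p (1 : G) := ⟨0, by simp⟩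

lemma isP_mul {p : ℕ} (hp : p.Prime) {a b : G} (ha : IsPElement p a) (hb : IsPElement p b)
    (hab : Commute a b) : IsPElement p (a * b) := by
  obtain ⟨k, hk⟩ := ha
  obtain ⟨l, hl⟩ := hb
  refine isP_of_pow hp (k := k + l) ?_
  rw [hab.mul_pow, pow_add, pow_mul, ← hk, pow_orderOf_eq_one, one_pow, one_mul, mul_comm,
    pow_mul, ← hl, pow_orderOf_eq_one, one_pow]

lemma isP_zpowers {p : ℕ} (hp : p.Prime) {a b : G} (ha : IsPElement p a) (hb : b ∈ zpowers a) :
    IsPElement p b := by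
  obtain ⟨k, hk⟩ := ha
  obtain ⟨z, rfl⟩ := mem_zpowers_iff.1 hb
  refine isP_of_pow hp (k := k) ?_
  rw [← zpow_natCast, zpow_comm, zpow_natCast, ← hk, pow_orderOf_eq_one, one_zpow]

lemma isP_coprime {p q : ℕ} (hp : p.Prime) (hq : q.Prime) (hpq : p ≠ q) {a b : G}
    (ha : IsPElement p a) (hb : IsPElement q b) : (orderOf a).Coprime (orderOf b) := by
  obtain ⟨k, hk⟩ := ha
  obtain ⟨l, hl⟩ := hb
  rw [hk, hl]
  exact Nat.Coprime.pow _ _ ((Nat.coprime_primes hp hq).2 hpq)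

lemma isP_coprime' {p : ℕ} {a b : G}
    (ha : IsPElement p a) (hb : p.Coprime (orderOf b)) : (orderOf a).Coprime (orderOf b) := by
  obtain ⟨k, hk⟩ := ha
  rw [hk]
  exact Nat.Coprime.pow_left _ hb

lemma isP_coprime_prime {p q : ℕ} (hp : p.Prime) (hq : q.Prime) (hpq : p ≠ q) {b : G}
    (hb : IsPElement q b) : p.Coprime (orderOf b) := by
  obtain ⟨l, hl⟩ := hb
  rw [hl]
  exact Nat.Coprime.pow_right _ ((Nat.coprime_primes hp hq).2 hpq)

lemma isP_coe {p : ℕ} {L : Subgroup G} {a : L} : IsPElement p (a : G) ↔ IsPElement p a := by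
  unfold IsPElement; rw [Subgroup.orderOf_coe]

/-- coprime orders commuting: left factor is a power of the product -/
lemma mem_zpowers_mul {a b : G} (h : Commute a b) (hc : (orderOf a).Coprime (orderOf b)) :
    a ∈ zpowers (a * b) := by
  obtain ⟨k, hk1, hk2⟩ := Nat.chineseRemainder hc 1 0
  have : (a * b) ^ k = a := by
    rw [h.mul_pow, pow_eq_pow_iff_modEq.2 hk1, pow_eq_pow_iff_modEq.2 hk2]; simp
  exact mem_zpowers_iff.2 ⟨k, by rw [zpow_natCast, this]⟩

lemma Cn_le_of_mem_zpowers {a g : G} (h : a ∈ zpowers g) : Cn g ≤ Cn a := by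
  intro c hc
  obtain ⟨z, rfl⟩ := mem_zpowers_iff.1 h
  rw [mem_Cn'] at *
  exact hc.zpow_right z

lemma Cn_mul {a b : G} (h : Commute a b) (hc : (orderOf a).Coprime (orderOf b)) :
    Cn (a * b) = Cn a ⊓ Cn b := by
  apply le_antisymm
  · refine le_inf (Cn_le_of_mem_zpowers (mem_zpowers_mul h hc)) (Cn_le_of_mem_zpowers ?_)
    rw [h.eq]
    exact mem_zpowers_mul h.symm hc.symm
  · rintro c ⟨h1, h2⟩
    have h1 := mem_Cn'.1 h1
    have h2 := mem_Cn'.1 h2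
    exact mem_Cn'.2 (h1.mul_right h2)

lemma classSize_dvd_of_le {a b : G} (h : Cn a ≤ Cn b) : classSize b ∣ classSize a :=
  index_dvd_of_le h

lemma eq_of_le_of_index [Finite G] {H K : Subgroup G} (h : H ≤ K) (hi : H.index ∣ K.index) :
    H = K := by
  have h0 : K.index ≠ 0 := FiniteIndex.index_ne_zero
  have h1 := relIndex_mul_index h
  have h2 : H.index = K.index := Nat.dvd_antisymm hi (index_dvd_of_le h)
  refine le_antisymm h (relIndex_eq_one.1 ?_)
  rw [h2] at h1
  exact Nat.eq_of_mul_eq_mul_right (Nat.pos_of_ne_zero h0) (by rw [h1, one_mul])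

/-- decomposition into p-part and p-prime-part -/
lemma exists_decomp [Finite G] {p : ℕ} (hp : p.Prime) (g : G) :
    ∃ a b : G, a ∈ zpowers g ∧ b ∈ zpowers g ∧ IsPElement p a ∧ p.Coprime (orderOf b) ∧
      Commute a b ∧ g = a * b := by
  obtain ⟨k, c, hc, hg⟩ := Nat.exists_eq_pow_mul_and_not_dvd (orderOf_pos g).ne' p hp.ne_one
  have hcop : (p ^ k).Coprime c := Nat.Coprime.pow_left _ ((Nat.Prime.coprime_iff_not_dvd hp).2 hc)
  have hbez := Nat.gcd_eq_gcd_ab (p ^ k) c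
  rw [hcop] at hbez
  have hord : g ^ (p ^ k * c) = 1 := by rw [← hg, pow_orderOf_eq_one]
  refine ⟨g ^ ((c : ℤ) * Nat.gcdB (p ^ k) c), g ^ (((p ^ k : ℕ) : ℤ) * Nat.gcdA (p ^ k) c),
    zpow_mem (mem_zpowers _) _, zpow_mem (mem_zpowers _) _, ?_, ?_, ?_, ?_⟩
  · refine isP_of_pow hp (k := k) ?_
    rw [← zpow_natCast, ← zpow_mul, mul_comm, ← mul_assoc, zpow_mul, ← Nat.cast_mul, zpow_natCast,
      hord, one_zpow]
  · have : orderOf (g ^ (((p ^ k : ℕ) : ℤ) * Nat.gcdA (p ^ k) c)) ∣ c := by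
      apply orderOf_dvd_of_pow_eq_one
      rw [← zpow_natCast, ← zpow_mul, mul_comm, ← mul_assoc, zpow_mul, ← Nat.cast_mul,
        zpow_natCast, mul_comm c, hord, one_zpow]
    exact Nat.Coprime.of_dvd_right this ((Nat.Prime.coprime_iff_not_dvd hp).2 hc)
  · exact (Commute.refl g).zpow_zpow _ _
  · rw [← zpow_add, add_comm, ← hbez]; simp

/-- if all prime power order powers of `g` lie in `H` then `g ∈ H`. -/
lemma mem_of_primary [Finite G] {H : Subgroup G} (g : G)
    (h : ∀ a ∈ zpowers g, ∀ p : ℕ, p.Prime → IsPElement p a → a ∈ H) : g ∈ H := by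
  induction hn : orderOf g using Nat.strong_induction_on generalizing g with
  | _ N ih =>
  subst hn
  by_cases h1 : orderOf g = 1
  · rw [orderOf_eq_one_iff.1 h1]; exact one_mem _
  · obtain ⟨p, hp, hpd⟩ := Nat.exists_prime_and_dvd h1
    obtain ⟨a, b, ha, hb, hpa, hpb, _, hab⟩ := exists_decomp hp g
    rw [hab]
    refine mul_mem (h a ha p hp hpa) (ih (orderOf b) ?_ b (fun c hc => h c ?_) rfl)
    · refine lt_of_le_of_ne (Nat.le_of_dvd (orderOf_pos g) (orderOf_dvd_of_mem_zpowers hb)) ?_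
      intro he
      rw [he] at hpb
      exact (Nat.Prime.coprime_iff_not_dvd hp).1 hpb hpd
    · exact (zpowers_le.2 hb) hc

/-- cover lemma -/
lemma cover [Finite G] {H : Subgroup G} (h : ∀ g : G, ∃ k : G, k * g * k⁻¹ ∈ H) : H = ⊤ := by
  classical
  have := Fintype.ofFinite G
  have := Fintype.ofFinite (G ⧸ H)
  have := Fintype.ofFinite (Quotient (MulAction.orbitRel G (G ⧸ H)))
  have hB := MulAction.sum_card_fixedBy_eq_card_orbits_mul_card_group G (G ⧸ H)
  have h1 : Fintype.card (Quotient (MulAction.orbitRel G (G ⧸ H))) ≤ 1 := by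
    rw [Fintype.card_le_one_iff_subsingleton]
    exact (MulAction.pretransitive_iff_subsingleton_quotient G (G ⧸ H)).1 inferInstance
  have h2 : ∀ g : G, 1 ≤ Fintype.card (MulAction.fixedBy (G ⧸ H) g) := by
    intro g
    obtain ⟨k, hk⟩ := h g
    refine Fintype.card_pos_iff.2 ⟨⟨((k⁻¹ : G) : G ⧸ H), ?_⟩⟩
    rw [MulAction.mem_fixedBy]
    change ((g * k⁻¹ : G) : G ⧸ H) = _
    rw [eq_comm, QuotientGroup.eq]
    simpa [mul_assoc] using hk
  have h3 : Fintype.card (MulAction.fixedBy (G ⧸ H) (1 : G)) = Fintype.card (G ⧸ H) := by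
    exact Fintype.card_congr (Equiv.subtypeUnivEquiv (fun x => by simp))
  rw [← index_eq_one]
  have h4 : H.index = Fintype.card (G ⧸ H) := by
    rw [index, Nat.card_eq_fintype_card]
  by_contra hne
  have h5 : 1 < Fintype.card (MulAction.fixedBy (G ⧸ H) (1 : G)) := by
    rw [h3, ← h4]
    have : H.index ≠ 0 := FiniteIndex.index_ne_zero
    omega
  have h6 : ∑ g : G, 1 < ∑ g : G, Fintype.card (MulAction.fixedBy (G ⧸ H) g) :=
    Finset.sum_lt_sum (fun g _ => h2 g) ⟨1, Finset.mem_univ _, h5⟩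
  rw [hB] at h6
  simp at h6
  nlinarith

/-- a p-subgroup is conjugate into a subgroup of index prime to p -/
lemma conj_into [Finite G] {p : ℕ} (hp : p.Prime) {H : Subgroup G} (hH : ¬ p ∣ H.index)
    {P : Subgroup G} (hP : ∀ x ∈ P, IsPElement p x) : ∃ k : G, ∀ x ∈ P, k * x * k⁻¹ ∈ H := by
  have := Fact.mk hp
  have hPg : IsPGroup p P := IsPGroup.iff_orderOf.2 (fun x => isP_coe.1 (hP x x.2))
  obtain ⟨x, hx⟩ := hPg.nonempty_fixed_point_of_prime_not_dvd_card (G ⧸ H) hH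
  obtain ⟨k, rfl⟩ := QuotientGroup.mk_surjective x
  refine ⟨k⁻¹, fun y hy => ?_⟩
  have := hx ⟨y, hy⟩
  change ((y * k : G) : G ⧸ H) = _ at this
  rw [eq_comm, QuotientGroup.eq] at this
  simpa [mul_assoc] using this

lemma conj_into_elt [Finite G] {p : ℕ} (hp : p.Prime) {H : Subgroup G} (hH : ¬ p ∣ H.index)
    {x : G} (hx : IsPElement p x) : ∃ k : G, k * x * k⁻¹ ∈ H := by
  obtain ⟨k, hk⟩ := conj_into hp hH (P := zpowers x) (fun y hy => isP_zpowers hp hx hy)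
  exact ⟨k, hk x (mem_zpowers x)⟩

lemma conj_into_rel [Finite G] {p : ℕ} (hp : p.Prime) {H L : Subgroup G} (hH : ¬ p ∣ H.relIndex L)
    {P : Subgroup G} (hP : ∀ x ∈ P, IsPElement p x) (hPL : P ≤ L) :
    ∃ k ∈ L, ∀ x ∈ P, k * x * k⁻¹ ∈ H := by
  obtain ⟨k, hk⟩ := conj_into hp (H := H.subgroupOf L) hH (P := P.subgroupOf L)
    (fun x hx => isP_coe.1 (hP x hx))
  exact ⟨k, k.2, fun x hx => hk ⟨x, hPL hx⟩ hx⟩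

lemma conj_into_elt_rel [Finite G] {p : ℕ} (hp : p.Prime) {H L : Subgroup G}
    (hH : ¬ p ∣ H.relIndex L) {x : G} (hx : IsPElement p x) (hxL : x ∈ L) :
    ∃ k ∈ L, k * x * k⁻¹ ∈ H := by
  obtain ⟨k, hkL, hk⟩ := conj_into_rel hp hH (P := zpowers x)
    (fun y hy => isP_zpowers hp hx hy) (zpowers_le.2 hxL)
  exact ⟨k, hkL, hk x (mem_zpowers x)⟩

lemma exists_sylow_sub [Finite G] {p : ℕ} (hp : p.Prime) (L : Subgroup G) :
    ∃ S : Subgroup G, S ≤ L ∧ (∀ s ∈ S, IsPElement p s) ∧ ¬ p ∣ S.relIndex L := by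
  have := Fact.mk hp
  let P : Sylow p L := default
  refine ⟨(P : Subgroup L).map L.subtype, map_subtype_le _, ?_, ?_⟩
  · rintro s ⟨t, ht, rfl⟩
    obtain ⟨k, hk⟩ := IsPGroup.iff_orderOf.1 P.isPGroup' ⟨t, ht⟩
    refine isP_coe.2 ⟨k, ?_⟩
    rw [← hk]
    exact (Subgroup.orderOf_mk t ht).symm
  · have := P.not_dvd_index
    rwa [relIndex, subgroupOf, comap_map_eq_self_of_injective L.subtype_injective]

/-- Lemma T -/
lemma lemT [Finite G] {p : ℕ} (hp : p.Prime) {a b x : G} {c e : ℕ} (hc : classSize a * c = e * classSize b)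
    (he : ¬ p ∣ e) (hle : ∀ t ∈ Cn a, IsPElement p t → t ∈ Cn b) (hx : IsPElement p x)
    (hxb : x ∈ Cn b) : ∃ k ∈ Cn b, k * x * k⁻¹ ∈ Cn a := by
  obtain ⟨S, hSa, hSp, hSi⟩ := exists_sylow_sub hp (Cn a)
  have hSb : S ≤ Cn b := fun s hs => hle s (hSa hs) (hSp s hs)
  have h1 := relIndex_mul_index hSa
  have h2 := relIndex_mul_index hSb
  have hb := classSize_pos b
  have : S.relIndex (Cn a) * e = S.relIndex (Cn b) * c := by
    apply Nat.eq_of_mul_eq_mul_right hb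
    calc _ = S.relIndex (Cn a) * (e * classSize b) := by ring
      _ = (S.relIndex (Cn a) * classSize a) * c := by rw [← hc]; ring
      _ = (S.relIndex (Cn b) * classSize b) * c := by
          rw [classSize_def, classSize_def, h1, h2]
      _ = _ := by ring
  have h3 : ¬ p ∣ S.relIndex (Cn b) := by
    intro hd
    have : p ∣ S.relIndex (Cn a) * e := this ▸ Dvd.dvd.mul_right hd c
    rcases (Nat.Prime.dvd_mul hp).1 this with h | h
    · exact hSi h
    · exact he h
  obtain ⟨k, hk, hkb⟩ := conj_into_elt_rel hp h3 hx hxb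
  exact ⟨k, hk, hSa hkb⟩

/-- B6 -/
lemma exists_noncentral [Finite G] {p : ℕ} (hp : p.Prime) {g h t : G} (hgh : classSize g ∣ classSize h)
    (ht : IsPElement p t) (htc : t ∉ center G) (hth : t ∈ Cn h) :
    ∃ s ∈ Cn g, IsPElement p s ∧ s ∉ center G := by
  by_contra hcon
  push Not at hcon
  obtain ⟨c, hc⟩ := hgh
  obtain ⟨k, -, hk⟩ := lemT hp (a := g) (b := h) (c := c) (e := 1) (by rw [hc]; ring)
    hp.not_dvd_one (fun s hs hsp => center_le_Cn _ (hcon s hs hsp)) ht hth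
  exact htc (conj_mem_center.1 (hcon _ hk (isP_conj k ht)))

lemma prod_of_coprime [Finite G] {H K : Subgroup G} (hc : H.index.Coprime K.index) (g : G) :
    ∃ k ∈ K, ∃ h ∈ H, g = k * h := by
  have hle : H.index ≤ H.relIndex K := by
    have h1 : H.index ∣ (H ⊓ K).index := index_dvd_of_le inf_le_left
    have h2 := relIndex_mul_index (inf_le_right : H ⊓ K ≤ K)
    rw [inf_relIndex_right] at h2
    rw [← h2] at h1
    refine Nat.le_of_dvd (Nat.pos_of_ne_zero ?_) (hc.dvd_of_dvd_mul_right h1)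
    exact FiniteIndex.index_ne_zero
  let f : K ⧸ H.subgroupOf K → G ⧸ H := Quotient.map' (fun k : K => (k : G)) (by
    intro a b hab
    rw [QuotientGroup.leftRel_apply] at *
    exact hab)
  have hf : Function.Injective f := by
    intro a b
    induction a using QuotientGroup.induction_on
    induction b using QuotientGroup.induction_on
    rename_i a b
    intro hab
    have hab : ((a : G) : G ⧸ H) = ((b : G) : G ⧸ H) := hab
    rw [QuotientGroup.eq] at hab
    exact QuotientGroup.eq.2 hab
  have hsurj : Function.Surjective f :=
    (Function.Injective.bijective_of_nat_card_le hf hle).2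
  obtain ⟨x, hx⟩ := hsurj ((g : G) : G ⧸ H)
  induction x using QuotientGroup.induction_on
  rename_i k
  have hx : ((k : G) : G ⧸ H) = ((g : G) : G ⧸ H) := hx
  rw [QuotientGroup.eq] at hx
  exact ⟨k, k.2, _, hx, by simp⟩

/-- B8 -/
lemma conj_comm_of_coprime [Finite G] {a b : G} (hc : (classSize a).Coprime (classSize b))
    (hab : Commute a b) (g : G) : Commute (g * a * g⁻¹) b := by
  obtain ⟨k, hk, h, hh, rfl⟩ := prod_of_coprime (H := Cn a) (K := Cn b) hc g
  have h1 : k * h * a * (k * h)⁻¹ = k * a * k⁻¹ := by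
    have := mem_Cn.1 hh
    rw [mul_assoc k, this]; simp [mul_assoc]
  rw [h1]
  have h2 : b = k * b * k⁻¹ := by
    have := mem_Cn.1 hk
    rw [this]; simp
  rw [h2]
  exact mem_Cn'.1 (conj_mem_Cn.2 (mem_Cn'.2 hab))

lemma classSize_sub {L : Subgroup G} (h : L) : classSize h = (Cn (h : G)).relIndex L := by
  rw [classSize_def, relIndex]
  congr 1
  ext x
  rw [mem_Cn, mem_subgroupOf, mem_Cn]
  exact Subtype.ext_iff

lemma relIndex_mul_classSize {x h : G} (hc : Commute x h) (ho : (orderOf x).Coprime (orderOf h)) :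
    (Cn h).relIndex (Cn x) * classSize x = classSize (x * h) := by
  rw [classSize_def (x * h), Cn_mul hc ho, ← relIndex_mul_index (inf_le_left : Cn x ⊓ Cn h ≤ Cn x),
    inf_relIndex_left, classSize_def]

end BF

namespace BF
open Subgroup
variable {G : Type*} [Group G]

lemma conj_mem_Cn_iff {k x h : G} : k * x * k⁻¹ ∈ Cn h ↔ x ∈ Cn (k⁻¹ * h * k) := by
  rw [← conj_mem_Cn (k := k) (h := x)]
  simp [mul_assoc]

lemma exists_sylow [Finite G] {p : ℕ} (hp : p.Prime) :
    ∃ S : Subgroup G, (∀ s ∈ S, IsPElement p s) ∧ ¬ p ∣ S.index := by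
  obtain ⟨S, -, h1, h2⟩ := exists_sylow_sub hp (⊤ : Subgroup G)
  exact ⟨S, h1, by rwa [relIndex_top_right] at h2⟩

lemma D0 [Finite G] {p : ℕ} (hp : p.Prime) (h : ∀ g : G, ¬ p ∣ classSize g) {z : G}
    (hz : IsPElement p z) : z ∈ center G := by
  obtain ⟨P, hP, hPi⟩ := exists_sylow (G := G) hp
  have : centralizer (P : Set G) = ⊤ := by
    apply cover
    intro g
    obtain ⟨k, hk⟩ := conj_into hp (h g) hP
    refine ⟨k⁻¹, ?_⟩
    rw [mem_centralizer_iff]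
    intro x hx
    have := mem_Cn.1 (conj_mem_Cn_iff.1 (hk x hx))
    simpa using this
  obtain ⟨k, hk⟩ := conj_into_elt hp hPi hz
  rw [← conj_mem_center (k := k), mem_center_iff]
  intro g
  have hg : g ∈ centralizer (P : Set G) := this ▸ mem_top g
  exact (mem_centralizer_iff.1 hg _ hk).symm

lemma D0_rel [Finite G] {p : ℕ} (hp : p.Prime) {L : Subgroup G}
    (h : ∀ g ∈ L, ¬ p ∣ (Cn g).relIndex L) {z : G}
    (hz : IsPElement p z) (hzL : z ∈ L) : L ≤ Cn z := by
  have := D0 (G := L) hp (fun g => by rw [classSize_sub]; exact h g g.2) (z := ⟨z, hzL⟩)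
    (isP_coe.1 hz)
  intro g hg
  rw [mem_Cn]
  exact congrArg Subtype.val (mem_center_iff.1 this ⟨g, hg⟩)

lemma D1 [Finite G] {p : ℕ} (hp : p.Prime)
    (h : ∀ g : G, p.Coprime (orderOf g) → ¬ p ∣ classSize g) :
    ∃ P : Subgroup G, P.Normal ∧ (∀ x, x ∈ P ↔ IsPElement p x) ∧
      ∀ x ∈ P, ∀ a, p.Coprime (orderOf a) → Commute x a := by
  obtain ⟨P, hP, hPi⟩ := exists_sylow (G := G) hp
  have hN : normalizer (P : Set G) = ⊤ := by
    apply cover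
    intro g
    obtain ⟨a, b, -, -, ha, hb, hab, rfl⟩ := exists_decomp hp g
    obtain ⟨k, hk⟩ := conj_into hp (h b hb) hP
    have hle : P.map (MulAut.conj k).toMonoidHom ≤ Cn b := by
      rintro _ ⟨x, hx, rfl⟩
      exact hk x hx
    have hi : ¬ p ∣ (P.map (MulAut.conj k).toMonoidHom).relIndex (Cn b) := by
      intro hd
      apply hPi
      have := index_map_of_bijective (f := (MulAut.conj k).toMonoidHom) (MulAut.conj k).bijective P
      rw [← this, ← relIndex_mul_index hle]
      exact hd.mul_right _
    obtain ⟨l, hl, hl'⟩ := conj_into_elt_rel hp hi ha (mem_Cn'.2 hab)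
    obtain ⟨u, hu, hu'⟩ := hl'
    have hu' : k * u * k⁻¹ = l * a * l⁻¹ := hu'
    refine ⟨k⁻¹ * l, ?_⟩
    have e1 : k⁻¹ * l * (a * b) * (k⁻¹ * l)⁻¹ = u * (k⁻¹ * b * k) := by
      have h1 : l * b * l⁻¹ = b := by rw [mem_Cn.1 hl]; simp
      have h2 : u = k⁻¹ * (l * a * l⁻¹) * k := by rw [← hu']; simp [mul_assoc]
      calc _ = k⁻¹ * (l * a * l⁻¹) * (l * b * l⁻¹) * k := by simp [mul_assoc]
        _ = _ := by rw [h1, h2]; simp [mul_assoc]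
    rw [e1]
    refine mul_mem (le_normalizer hu) ?_
    apply centralizer_le_normalizer
    rw [mem_centralizer_iff]
    intro x hx
    exact mem_Cn.1 (conj_mem_Cn_iff.1 (hk x hx))
  have hn : P.Normal := normalizer_eq_top_iff.1 hN
  refine ⟨P, hn, fun x => ⟨hP x, fun hx => ?_⟩, fun x hx a ha => ?_⟩
  · obtain ⟨k, hk⟩ := conj_into_elt hp hPi hx
    have := hn.conj_mem _ hk k⁻¹
    simpa [mul_assoc] using this
  · obtain ⟨k, hk⟩ := conj_into hp (h a ha) hP
    have := hk _ (hn.conj_mem x hx k⁻¹)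
    have e : k * (k⁻¹ * x * k⁻¹⁻¹) * k⁻¹ = x := by simp [mul_assoc]
    rw [e] at this
    exact mem_Cn'.1 this

lemma D1_rel [Finite G] {p : ℕ} (hp : p.Prime) {L : Subgroup G}
    (h : ∀ g ∈ L, p.Coprime (orderOf g) → ¬ p ∣ (Cn g).relIndex L) :
    (∀ x ∈ L, ∀ a ∈ L, IsPElement p x → p.Coprime (orderOf a) → Commute x a) ∧
    ∃ P : Subgroup G, P ≤ L ∧ ∀ x ∈ L, x ∈ P ↔ IsPElement p x := by
  obtain ⟨P, -, h1, h2⟩ := D1 (G := L) hp (fun g hg => by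
    rw [classSize_sub]; exact h g g.2 (by rwa [Subgroup.orderOf_coe]))
  constructor
  · intro x hx a ha hxp hap
    have := h2 ⟨x, hx⟩ ((h1 _).2 (isP_coe.1 hxp)) ⟨a, ha⟩ (by rwa [Subgroup.orderOf_mk])
    exact congrArg Subtype.val this
  · refine ⟨P.map L.subtype, map_subtype_le _, fun x hx => ⟨?_, fun hxp => ?_⟩⟩
    · rintro ⟨y, hy, rfl⟩
      exact isP_coe.2 ((h1 y).1 hy)
    · exact ⟨⟨x, hx⟩, (h1 _).2 (isP_coe.1 hxp), rfl⟩

/-- the standing hypothesis -/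
structure Hyp (G : Type*) [Group G] (m n : ℕ) : Prop where
  hm : 1 < m
  hn : 1 < n
  hmn : Nat.Coprime m n
  all : ∀ g : G, classSize g = 1 ∨ classSize g = m ∨ classSize g = n ∨ classSize g = m * n
  em : ∃ g : G, classSize g = m
  en : ∃ g : G, classSize g = n
  emn : ∃ g : G, classSize g = m * n

namespace Hyp

variable {m n : ℕ}

lemma swap (H : Hyp G m n) : Hyp G n m where
  hm := H.hn
  hn := H.hm
  hmn := H.hmn.symm
  all g := by rcases H.all g with h | h | h | h <;> simp [h, mul_comm]
  em := H.en
  en := H.em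
  emn := by rw [mul_comm]; exact H.emn

lemma not_both (H : Hyp G m n) {p : ℕ} (hp : p.Prime) (h1 : p ∣ m) (h2 : p ∣ n) : False :=
  hp.not_dvd_one (H.hmn ▸ Nat.dvd_gcd h1 h2)

lemma mpos (H : Hyp G m n) : 0 < m := by have := H.hm; omega
lemma npos (H : Hyp G m n) : 0 < n := by have := H.hn; omega

lemma not_m_dvd_n (H : Hyp G m n) (h : m ∣ n) : False := by
  have := Nat.Coprime.eq_one_of_dvd H.hmn h
  have := H.hm
  omega

lemma not_n_dvd_m (H : Hyp G m n) (h : n ∣ m) : False := H.swap.not_m_dvd_n h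

lemma not_mn_dvd_m (H : Hyp G m n) (h : m * n ∣ m) : False :=
  H.not_n_dvd_m ((Dvd.intro_left m rfl).trans h)

lemma not_mn_dvd_n (H : Hyp G m n) (h : m * n ∣ n) : False :=
  H.not_m_dvd_n ((Dvd.intro n rfl).trans h)

/-- if `m ∣ i(g)` then `i(g) ∈ {m, mn}` -/
lemma of_m_dvd (H : Hyp G m n) {g : G} (h : m ∣ classSize g) :
    classSize g = m ∨ classSize g = m * n := by
  have := H.hm
  rcases H.all g with h1 | h1 | h1 | h1
  · rw [h1] at h; have := Nat.le_of_dvd one_pos h; omega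
  · exact Or.inl h1
  · rw [h1] at h; exact (H.not_m_dvd_n h).elim
  · exact Or.inr h1

lemma of_n_dvd (H : Hyp G m n) {g : G} (h : n ∣ classSize g) :
    classSize g = n ∨ classSize g = m * n := by
  have := H.swap.of_m_dvd h
  rwa [mul_comm] at this

lemma of_mn_dvd (H : Hyp G m n) {g : G} (h : m * n ∣ classSize g) : classSize g = m * n := by
  rcases H.of_m_dvd ((Dvd.intro n rfl).trans h) with h1 | h1
  · rw [h1] at h; exact (H.not_mn_dvd_m h).elim
  · exact h1

lemma of_mn_dvd' (H : Hyp G m n) {g : G} (h1 : m ∣ classSize g) (h2 : n ∣ classSize g) :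
    classSize g = m * n := H.of_mn_dvd (H.hmn.mul_dvd_of_dvd_of_dvd h1 h2)

lemma noncentral_m (H : Hyp G m n) {g : G} (h : classSize g = m) : g ∉ center G := by
  rw [← classSize_eq_one, h]; exact H.hm.ne'

lemma noncentral_n (H : Hyp G m n) {g : G} (h : classSize g = n) : g ∉ center G :=
  H.swap.noncentral_m h

lemma noncentral_mn (H : Hyp G m n) {g : G} (h : classSize g = m * n) : g ∉ center G := by
  rw [← classSize_eq_one, h]
  have := H.hm; have := H.hn
  nlinarith

lemma dvd_mn (H : Hyp G m n) (g : G) : classSize g ∣ m * n := by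
  rcases H.all g with h | h | h | h <;> simp [h]

/-- mn-lemma -/
lemma mn_le [Finite G] (H : Hyp G m n) {u a : G} (hu : classSize u = m * n) (hc : Commute u a)
    (ho : (orderOf u).Coprime (orderOf a)) : Cn u ≤ Cn a := by
  have h1 : Cn (u * a) ≤ Cn u := by rw [Cn_mul hc ho]; exact inf_le_left
  have h2 : Cn (u * a) = Cn u := eq_of_le_of_index h1 (by
    change classSize (u * a) ∣ classSize u
    rw [hu]; exact H.dvd_mn _)
  rw [← h2, Cn_mul hc ho]
  exact inf_le_right

/-- C(x) relative index of coprime-order commuting element when x of type m is 1 or n -/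
lemma rel_m (H : Hyp G m n) {x a : G} (hx : classSize x = m) (hc : Commute x a)
    (ho : (orderOf x).Coprime (orderOf a)) :
    (Cn a).relIndex (Cn x) = 1 ∨ (Cn a).relIndex (Cn x) = n := by
  have h := relIndex_mul_classSize hc ho
  rw [hx] at h
  rcases H.of_m_dvd (g := x * a) (by rw [← h]; exact Dvd.intro_left _ rfl) with h1 | h1
  · left
    exact Nat.eq_of_mul_eq_mul_right H.mpos (by rw [h, h1, one_mul])
  · right
    exact Nat.eq_of_mul_eq_mul_right H.mpos (by rw [h, h1, mul_comm])

lemma rel_n (H : Hyp G m n) {x a : G} (hx : classSize x = n) (hc : Commute x a)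
    (ho : (orderOf x).Coprime (orderOf a)) :
    (Cn a).relIndex (Cn x) = 1 ∨ (Cn a).relIndex (Cn x) = m := H.swap.rel_m hx hc ho

/-- Step 1 -/
lemma step1 [Finite G] (H : Hyp G m n) {r : ℕ} (hr : r.Prime) (hrm : r ∣ m) {x : G}
    (hxr : IsPElement r x) (hx : classSize x = m) :
    (∀ t ∈ Cn x, ∀ a ∈ Cn x, IsPElement r t → r.Coprime (orderOf a) → Commute t a) ∧
    ∃ P : Subgroup G, P ≤ Cn x ∧ ∀ t ∈ Cn x, t ∈ P ↔ IsPElement r t := by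
  apply D1_rel hr
  intro a ha hao hd
  rcases H.rel_m hx (mem_Cn'.1 ha).symm (isP_coprime' hxr hao) with h | h
  · rw [h] at hd; exact hr.not_dvd_one hd
  · rw [h] at hd; exact H.not_both hr hrm hd

/-- Step 2 -/
lemma step2 [Finite G] (H : Hyp G m n) {r p : ℕ} (hr : r.Prime) (hrm : r ∣ m) (hp : p.Prime)
    (hpm : p ∣ m) {x z : G} (hxr : IsPElement r x) (hx : classSize x = m)
    (hzp : IsPElement p z) (hz : classSize z = n) : False := by
  -- wlog z ∈ C(x)
  obtain ⟨k, hk⟩ := conj_into_elt hr (H := Cn z) (by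
    intro hd; change r ∣ classSize z at hd; rw [hz] at hd; exact H.not_both hr hrm hd) hxr
  have hx' := classSize_conj x k
  rw [hx] at hx'
  have hxr' := isP_conj k hxr
  generalize k * x * k⁻¹ = x at *
  have hzx : z ∈ Cn x := mem_Cn_comm.1 hk
  obtain ⟨s1, -⟩ := H.step1 hr hrm hxr' hx'
  by_cases hrp : r = p
  · subst hrp
    obtain ⟨q, hq, hqn⟩ := Nat.exists_prime_and_dvd H.hn.ne'
    have hqr : q ≠ r := fun h => H.not_both hr hrm (h ▸ hqn)
    obtain ⟨Q, hQ, hQi⟩ := exists_sylow (G := G) hq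
    obtain ⟨l, hl⟩ := conj_into hq (H := Cn x) (by
      intro hd; change q ∣ classSize x at hd; rw [hx'] at hd; exact H.not_both hq hd hqn) hQ
    have hle : Q.map (MulAut.conj l).toMonoidHom ≤ Cn z := by
      rintro _ ⟨y, hy, rfl⟩
      refine mem_Cn'.2 (s1 z hzx _ (hl y hy) hzp ?_).symm
      exact isP_coprime_prime hr hq hqr.symm (isP_conj l (hQ y hy))
    apply hQi
    rw [← index_map_of_bijective (f := (MulAut.conj l).toMonoidHom) (MulAut.conj l).bijective Q]
    refine (?_ : q ∣ classSize z).trans (index_dvd_of_le hle)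
    rw [hz]; exact hqn
  · have hle : Cn x ≤ Cn z := by
      refine D0_rel hp (fun h hh hd => ?_) hzp hzx
      obtain ⟨a, b, ha, hb, har, hbr, hab, rfl⟩ := exists_decomp hr h
      have ha' : a ∈ Cn x := (zpowers_le.2 hh) ha
      have hb' : b ∈ Cn x := (zpowers_le.2 hh) hb
      -- p ∤ relindex of C(a)∩C(b)
      have h1 : ¬ p ∣ (Cn b).relIndex (Cn x) := by
        intro hd
        rcases H.rel_m hx' (mem_Cn'.1 hb').symm (isP_coprime' hxr' hbr) with h | h
        · rw [h] at hd; exact hp.not_dvd_one hd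
        · rw [h] at hd; exact H.not_both hp hpm hd
      -- sylow p of C(x) ⊓ C(b) commutes with a
      obtain ⟨S, hS, hSp, hSi⟩ := exists_sylow_sub hp (Cn b ⊓ Cn x)
      have hSab : S ≤ Cn (a * b) ⊓ Cn x := by
        intro s hs
        have hsb := hS hs
        refine ⟨?_, hsb.2⟩
        have c1 : Commute a s := s1 a ha' s hsb.2 har (isP_coprime_prime hr hp hrp (hSp s hs))
        exact mem_Cn'.2 (c1.symm.mul_right (mem_Cn'.1 hsb.1))
      have h2 : ¬ p ∣ S.relIndex (Cn x) := by
        rw [← relIndex_mul_relIndex S (Cn b ⊓ Cn x) (Cn x) hS inf_le_right, inf_relIndex_right]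
        intro hd
        rcases (Nat.Prime.dvd_mul hp).1 hd with h | h
        · exact hSi h
        · exact h1 h
      apply h2
      rw [← relIndex_mul_relIndex S _ (Cn x) hSab inf_le_right, inf_relIndex_right]
      exact hd.mul_left _
    have := classSize_dvd_of_le hle
    rw [hz, hx'] at this
    exact H.not_n_dvd_m this

/-- a class of type m has a primary element of type m -/
lemma exists_primary_m [Finite G] (H : Hyp G m n) : ∃ x : G, ∃ r : ℕ, r.Prime ∧ IsPElement r x ∧
    classSize x = m := by
  obtain ⟨g, hg⟩ := H.em
  by_contra hcon
  push Not at hcon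
  apply H.noncentral_m hg
  apply mem_of_primary
  intro a ha p hp hap
  have h1 := classSize_dvd_of_le (Cn_le_of_mem_zpowers ha)
  rw [hg] at h1
  rcases H.all a with h | h | h | h
  · exact classSize_eq_one.1 h
  · exact (hcon a p hp hap h).elim
  · rw [h] at h1; exact (H.not_n_dvd_m h1).elim
  · rw [h] at h1; exact (H.not_mn_dvd_m h1).elim

/-- primes dividing neither m nor n have central elements -/
lemma central_of_not_dvd [Finite G] (H : Hyp G m n) {p : ℕ} (hp : p.Prime) (h : ¬ p ∣ m * n) {z : G}
    (hz : IsPElement p z) : z ∈ center G :=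
  D0 hp (fun g hd => h (hd.trans (H.dvd_mn g))) hz

/-- primes dividing m have noncentral elements -/
lemma exists_noncentral_of_dvd [Finite G] {p : ℕ} (hp : p.Prime) {g : G} (h : p ∣ classSize g) :
    ∃ z : G, IsPElement p z ∧ z ∉ center G := by
  by_contra hcon
  push Not at hcon
  obtain ⟨P, hP, hPi⟩ := exists_sylow (G := G) hp
  apply hPi
  exact h.trans (index_dvd_of_le (fun z hz => center_le_Cn g (hcon z (hP z hz))))

end Hyp
end BF

namespace BF
open Subgroup
variable {G : Type*} [Group G]

lemma comm_of_central {a b d : G} (hd : d ∈ center G) (h : a * b * a⁻¹ = d * b)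
    (ho : (orderOf a).Coprime (orderOf b)) : Commute a b := by
  have hdc : ∀ g, Commute d g := fun g => ((mem_center_iff.1 hd) g).symm
  have h1 : d ^ orderOf b = 1 := by
    have : (a * b * a⁻¹) ^ orderOf b = 1 := by rw [conj_pow, pow_orderOf_eq_one]; simp
    rw [h, (hdc b).mul_pow, pow_orderOf_eq_one, mul_one] at this
    exact this
  have h2 : ∀ k : ℕ, a ^ k * b * (a ^ k)⁻¹ = d ^ k * b := by
    intro k
    induction k with
    | zero => simp
    | succ k ih =>
      calc a ^ (k + 1) * b * (a ^ (k + 1))⁻¹ = a * (a ^ k * b * (a ^ k)⁻¹) * a⁻¹ := by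
            rw [pow_succ']; simp [mul_assoc]
        _ = a * d ^ k * b * a⁻¹ := by rw [ih]; simp [mul_assoc]
        _ = d ^ k * (a * b * a⁻¹) := by
            rw [← ((hdc a).pow_left k).eq]; simp [mul_assoc]
        _ = _ := by rw [h, ← mul_assoc, ← pow_succ]
  have h3 : d ^ orderOf a = 1 := by
    have := h2 (orderOf a)
    rw [pow_orderOf_eq_one] at this
    simpa using this.symm
  have h4 : d = 1 := by
    have := Nat.dvd_gcd (orderOf_dvd_of_pow_eq_one h3) (orderOf_dvd_of_pow_eq_one h1)
    rw [ho] at this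
    exact orderOf_eq_one_iff.1 (Nat.dvd_one.1 this)
  rw [h4, one_mul] at h
  exact mul_inv_eq_iff_eq_mul.1 h

/-- a full Sylow subgroup inside a centralizer -/
lemma sylow_in [Finite G] {q : ℕ} (hq : q.Prime) {H : Subgroup G} (h : ¬ q ∣ H.index) :
    ∃ Q ≤ H, (∀ y ∈ Q, IsPElement q y) ∧ ¬ q ∣ Q.index := by
  obtain ⟨Q, h1, h2, h3⟩ := exists_sylow_sub hq H
  refine ⟨Q, h1, h2, ?_⟩
  rw [← relIndex_mul_index h1]
  intro hd
  rcases (Nat.Prime.dvd_mul hq).1 hd with hd | hd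
  · exact h3 hd
  · exact h hd

/-- Case A -/
structure HypA (G : Type*) [Group G] (m n : ℕ) : Prop where
  H : Hyp G m n
  am : ∀ (r : ℕ) (x : G), r.Prime → r ∣ m → IsPElement r x → classSize x ≠ m
  an : ∀ (r : ℕ) (x : G), r.Prime → r ∣ n → IsPElement r x → classSize x ≠ n

namespace HypA
variable {m n : ℕ}

lemma swap (A : HypA G m n) : HypA G n m := ⟨A.H.swap, A.an, A.am⟩

lemma fa (A : HypA G m n) {p : ℕ} (hp : p.Prime) (hpm : p ∣ m) {u : G} (hu : IsPElement p u)
    (huc : u ∉ center G) : classSize u = n ∨ classSize u = m * n := by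
  rcases A.H.all u with h | h | h | h
  · exact (huc (classSize_eq_one.1 h)).elim
  · exact (A.am p u hp hpm hu h).elim
  · exact Or.inl h
  · exact Or.inr h

lemma fa' (A : HypA G m n) {p : ℕ} (hp : p.Prime) (hpm : p ∣ n) {u : G} (hu : IsPElement p u)
    (huc : u ∉ center G) : classSize u = m ∨ classSize u = m * n := by
  have := A.swap.fa hp hpm hu huc
  rwa [mul_comm] at this

lemma existsX [Finite G] (A : HypA G m n) : ∃ (x : G) (r : ℕ), r.Prime ∧ r ∣ n ∧ IsPElement r x ∧
    classSize x = m := by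
  obtain ⟨x, r, hr, hxr, hx⟩ := A.H.exists_primary_m
  refine ⟨x, r, hr, ?_, hxr, hx⟩
  by_contra hrn
  by_cases hrm : r ∣ m
  · exact A.am r x hr hrm hxr hx
  · refine A.H.noncentral_m hx (A.H.central_of_not_dvd hr ?_ hxr)
    rw [hr.dvd_mul]; tauto

lemma existsZ [Finite G] (A : HypA G m n) : ∃ (z : G) (p : ℕ), p.Prime ∧ p ∣ m ∧ IsPElement p z ∧
    classSize z = n := A.swap.existsX

lemma step4a_aux [Finite G] (A : HypA G m n) {g u' : G} (hg : classSize g = m * n) {p : ℕ}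
    (hp : p.Prime) (hu' : IsPElement p u') (huc : u' ∉ center G) (hug : u' ∈ Cn g) :
    ∃ u w : G, ∃ q : ℕ, q.Prime ∧ q ∣ n ∧ IsPElement p u ∧ IsPElement q w ∧
      u ∉ center G ∧ w ∉ center G ∧ Commute u w := by
  obtain ⟨q, hq, hqn⟩ := Nat.exists_prime_and_dvd A.H.hn.ne'
  obtain ⟨y, hy⟩ := A.H.en
  obtain ⟨w, hw, hwc⟩ := Hyp.exists_noncentral_of_dvd hq (g := y) (hy.symm ▸ hqn)
  obtain ⟨s, hs, hsp, hsc⟩ := exists_noncentral hp (g := w) (h := g)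
    (by rw [hg]; exact A.H.dvd_mn w) hu' huc hug
  exact ⟨s, w, q, hq, hqn, hsp, hw, hsc, hwc, mem_Cn'.1 hs⟩

lemma step4a [Finite G] (A : HypA G m n) :
    ∃ u w : G, ∃ p q : ℕ, p.Prime ∧ p ∣ m ∧ q.Prime ∧ q ∣ n ∧ IsPElement p u ∧ IsPElement q w ∧
      u ∉ center G ∧ w ∉ center G ∧ Commute u w := by
  obtain ⟨g, hg⟩ := A.H.emn
  have : ∃ a ∈ zpowers g, ∃ p : ℕ, p.Prime ∧ IsPElement p a ∧ a ∉ center G := by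
    by_contra hcon
    push Not at hcon
    exact A.H.noncentral_mn hg (mem_of_primary g (fun a ha p hp hap => hcon a ha p hp hap))
  obtain ⟨a, ha, p, hp, hap, hac⟩ := this
  have hag : a ∈ Cn g := by
    rw [mem_Cn_comm]
    exact Cn_le_of_mem_zpowers ha (self_mem_Cn g)
  by_cases hpm : p ∣ m
  · obtain ⟨u, w, q, hq, hqn, h1, h2, h3, h4, h5⟩ := A.step4a_aux hg hp hap hac hag
    exact ⟨u, w, p, q, hp, hpm, hq, hqn, h1, h2, h3, h4, h5⟩
  · have hpn : p ∣ n := by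
      by_contra hpn
      refine hac (A.H.central_of_not_dvd hp ?_ hap)
      rw [hp.dvd_mul]; tauto
    obtain ⟨u, w, q, hq, hqn, h1, h2, h3, h4, h5⟩ :=
      A.swap.step4a_aux (hg.trans (mul_comm _ _)) hp hap hac hag
    exact ⟨w, u, q, p, hq, hqn, hp, hpn, h2, h1, h4, h3, h5.symm⟩

lemma ndvd_of_n (A : HypA G m n) {p : ℕ} (hp : p.Prime) (hpm : p ∣ m) {z : G}
    (hz : classSize z = n) : ¬ p ∣ (Cn z).index := by
  intro hd
  rw [← classSize_def, hz] at hd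
  exact A.H.not_both hp hpm hd

lemma ndvd_of_m (A : HypA G m n) {p : ℕ} (hp : p.Prime) (hpm : p ∣ n) {z : G}
    (hz : classSize z = m) : ¬ p ∣ (Cn z).index := A.swap.ndvd_of_n hp hpm hz

lemma prime_ne (A : HypA G m n) {p q : ℕ} (hp : p.Prime) (hpm : p ∣ m) (hqn : q ∣ n) : p ≠ q := by
  rintro rfl
  exact A.H.not_both hp hpm hqn

lemma b1 [Finite G] (A : HypA G m n) {u w : G} {p q : ℕ} (hp : p.Prime) (hpm : p ∣ m) (hq : q.Prime)
    (hqn : q ∣ n) (hu : IsPElement p u) (hw : IsPElement q w) (huc : u ∉ center G)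
    (huw : Commute u w) :
    ∃ (z : G) (p' : ℕ), p'.Prime ∧ p' ∣ m ∧ IsPElement p' z ∧ classSize z = n ∧ Commute z w := by
  rcases A.fa hp hpm hu huc with h | h
  · exact ⟨u, p, hp, hpm, hu, h, huw⟩
  · obtain ⟨z0, p', hp', hpm', hz0, hz0n⟩ := A.existsZ
    obtain ⟨k, hk⟩ := conj_into_elt hp (A.ndvd_of_n hp hpm hz0n) hu
    have h1 := conj_mem_Cn_iff.1 hk
    have h2 := A.H.mn_le h huw (isP_coprime hp hq (A.prime_ne hp hpm hqn) hu hw) (mem_Cn_comm.1 h1)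
    have e : k⁻¹ * z0 * k = k⁻¹ * z0 * k⁻¹⁻¹ := by simp
    rw [e] at h2
    exact ⟨_, p', hp', hpm', isP_conj k⁻¹ hz0, by rw [classSize_conj, hz0n], mem_Cn'.1 h2⟩

/-- step four b -/
lemma step4b [Finite G] (A : HypA G m n) :
    ∃ (x z : G) (p r : ℕ), p.Prime ∧ p ∣ m ∧ r.Prime ∧ r ∣ n ∧ IsPElement r x ∧ IsPElement p z ∧
      classSize x = m ∧ classSize z = n ∧ Commute x z := by
  obtain ⟨u, w, p, q, hp, hpm, hq, hqn, hu, hw, huc, hwc, huw⟩ := A.step4a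
  obtain ⟨z, p', hp', hpm', hz, hzn, hzw⟩ := A.b1 hp hpm hq hqn hu hw huc huw
  obtain ⟨x, r, hr, hrn, hx, hxm, hxz⟩ := A.swap.b1 hq hqn hp' hpm' hw hz hwc hzw.symm
  exact ⟨x, z, p', r, hp', hpm', hr, hrn, hx, hz, hxm, hzn, hxz⟩

lemma mul_mn [Finite G] (A : HypA G m n) {x z : G} (hxz : Commute x z)
    (ho : (orderOf x).Coprime (orderOf z)) (hx : m ∣ classSize x) (hz : n ∣ classSize z) :
    classSize (x * z) = m * n := by
  have := Cn_mul hxz ho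
  exact A.H.of_mn_dvd'
    (hx.trans (classSize_dvd_of_le (by rw [this]; exact inf_le_left)))
    (hz.trans (classSize_dvd_of_le (by rw [this]; exact inf_le_right)))

/-- Sub1 of step four c -/
lemma step4c1 [Finite G] (A : HypA G m n) {x z x' : G} {p r s : ℕ} (hp : p.Prime) (hpm : p ∣ m)
    (hr : r.Prime) (hrn : r ∣ n) (hs : s.Prime) (hsn : s ∣ n) (hsr : s ≠ r)
    (hxr : IsPElement r x) (hzp : IsPElement p z) (hx : classSize x = m) (hz : classSize z = n)
    (hxz : Commute x z) (hxs' : IsPElement s x') (hx' : classSize x' = m) : False := by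
  have hpr := A.prime_ne hp hpm hrn
  have hps := A.prime_ne hp hpm hsn
  -- arrange C(x) = C(x)
  obtain ⟨S', hS'le, hS's, hS'i⟩ := sylow_in hs (A.ndvd_of_m hs hsn hx')
  have hx'S : x' ∈ S' := by
    have hi : ¬ s ∣ S'.relIndex (Cn x') := by
      intro hd
      apply hS'i
      rw [← relIndex_mul_index hS'le]
      exact hd.mul_right _
    obtain ⟨l, hl, hl'⟩ := conj_into_elt_rel hs hi hxs' (self_mem_Cn x')
    rw [mem_Cn.1 hl] at hl'
    simpa using hl'
  obtain ⟨k, hk⟩ := conj_into hs (A.ndvd_of_m hs hsn hx) hS's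
  have hle : S'.map (MulAut.conj k).toMonoidHom ≤ Cn (k * x' * k⁻¹) := by
    rintro _ ⟨y, hy, rfl⟩
    exact conj_mem_Cn.2 (hS'le hy)
  have hle2 : S'.map (MulAut.conj k).toMonoidHom ≤ Cn x := by
    rintro _ ⟨y, hy, rfl⟩
    exact hk y hy
  have hSi : ¬ s ∣ (S'.map (MulAut.conj k).toMonoidHom).index := by
    rwa [index_map_of_bijective (f := (MulAut.conj k).toMonoidHom) (MulAut.conj k).bijective]
  have hx'x := hk x' hx'S
  have hxs'' := isP_conj k hxs'
  have hx'' := (classSize_conj x' k).trans hx'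
  generalize S'.map (MulAut.conj k).toMonoidHom = S at *
  generalize k * x' * k⁻¹ = x' at *
  have hcxx' : Commute x x' := (mem_Cn'.1 hx'x).symm
  have hoxx' := isP_coprime hr hs hsr.symm hxr hxs''
  have hCxx' := Cn_mul hcxx' hoxx'
  have htyp : classSize (x * x') = m := by
    rcases A.H.of_m_dvd (g := x * x')
      (hx ▸ classSize_dvd_of_le (by rw [hCxx']; exact inf_le_left)) with h | h
    · exact h
    · exfalso
      apply hSi
      refine (?_ : s ∣ classSize (x * x')).trans (index_dvd_of_le (K := Cn (x * x')) ?_)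
      · rw [h]; exact hsn.mul_left _
      · rw [hCxx']; exact le_inf hle2 hle
  have hC1 : Cn (x * x') = Cn x := eq_of_le_of_index (by rw [hCxx']; exact inf_le_left)
    (by rw [← classSize_def, ← classSize_def, htyp, hx])
  have hC2 : Cn (x * x') = Cn x' := eq_of_le_of_index (by rw [hCxx']; exact inf_le_right)
    (by rw [← classSize_def, ← classSize_def, htyp, hx''])
  have hCC : Cn x' = Cn x := hC2 ▸ hC1
  have hpn : ¬ p ∣ n := fun h => A.H.not_both hp hpm h
  have fin : ∀ b : G, (Cn b).relIndex (Cn x) = 1 ∨ (Cn b).relIndex (Cn x) = n →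
      ¬ p ∣ (Cn b).relIndex (Cn x) := by
    rintro b (h | h) <;> rw [h]
    · exact hp.not_dvd_one
    · exact hpn
  have hzx : z ∈ Cn x := mem_Cn'.2 hxz.symm
  have main : ∀ a ∈ Cn x, p.Coprime (orderOf a) → ¬ p ∣ (Cn a).relIndex (Cn x) := by
    intro a ha hao
    obtain ⟨b, c, hb, hc, hbr, hcr, hbc, hbceq⟩ := exists_decomp hr a
    have hbx : b ∈ Cn x := (zpowers_le.2 ha) hb
    have hcx : c ∈ Cn x := (zpowers_le.2 ha) hc
    have hbo : p.Coprime (orderOf b) := hao.of_dvd_right (orderOf_dvd_of_mem_zpowers hb)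
    have hco : p.Coprime (orderOf c) := hao.of_dvd_right (orderOf_dvd_of_mem_zpowers hc)
    have hCa : Cn a = Cn b ⊓ Cn c := by rw [hbceq, Cn_mul hbc (isP_coprime' hbr hcr)]
    have hx'b : Commute x' b := by
      have : b ∈ Cn x' := by rw [hCC]; exact hbx
      exact (mem_Cn'.1 this).symm
    have hob : (orderOf x').Coprime (orderOf b) := isP_coprime hs hr hsr hxs'' hbr
    have hoc : (orderOf x).Coprime (orderOf c) := isP_coprime' hxr hcr
    have Rb := A.H.rel_m hx'' hx'b hob
    rw [hCC] at Rb
    have Rc := A.H.rel_m hx (mem_Cn'.1 hcx).symm hoc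
    rcases Rb with Rb1 | Rb1
    · have : Cn a ⊓ Cn x = Cn c ⊓ Cn x := by
        rw [hCa, inf_assoc, inf_eq_right]
        exact inf_le_right.trans (relIndex_eq_one.1 Rb1)
      rw [← inf_relIndex_right, this, inf_relIndex_right]
      exact fin _ Rc
    · obtain ⟨l, hl, hl'⟩ := conj_into_elt_rel hp (L := Cn x) (fin _ (Or.inr Rb1)) hzp hzx
      have hz'x : l * z * l⁻¹ ∈ Cn x := mul_mem (mul_mem hl hzx) (inv_mem hl)
      have hz'p := isP_conj l hzp
      have hz'n := (classSize_conj z l).trans hz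
      generalize l * z * l⁻¹ = z' at *
      have hz'x' : z' ∈ Cn x' := by rw [hCC]; exact hz'x
      have t1 : classSize (x' * b) = m * n := by
        rw [← relIndex_mul_classSize hx'b hob, hCC, Rb1, hx'', mul_comm]
      have ho1 : (orderOf (x' * b)).Coprime (orderOf z') := by
        rw [hx'b.orderOf_mul_eq_mul_orderOf_of_coprime hob]
        exact Nat.Coprime.mul_left (isP_coprime hs hp hps.symm hxs'' hz'p)
          (isP_coprime hr hp hpr.symm hbr hz'p)
      have hc1 : Commute (x' * b) z' :=
        Commute.mul_left (mem_Cn'.1 hz'x').symm (mem_Cn'.1 hl').symm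
      have le1 := A.H.mn_le t1 hc1 ho1
      have hxz' : Commute x z' := (mem_Cn'.1 hz'x).symm
      have hoxz' := isP_coprime hr hp hpr.symm hxr hz'p
      have t2 := A.mul_mn hxz' hoxz' hx.symm.dvd hz'n.symm.dvd
      have e1 : Cn (x' * b) = Cn (x * z') := by
        refine eq_of_le_of_index ?_ (by rw [← classSize_def, ← classSize_def, t1, t2])
        rw [Cn_mul hxz' hoxz', ← hCC]
        exact le_inf (by rw [Cn_mul hx'b hob]; exact inf_le_left) le1
      rw [Cn_mul hx'b hob, Cn_mul hxz' hoxz', hCC] at e1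
      have hcz' : Commute z' c := by
        have : c ∈ Cn x ⊓ Cn b := ⟨hcx, mem_Cn'.2 hbc.symm⟩
        rw [e1] at this
        exact (mem_Cn'.1 this.2).symm
      have hoz'c : (orderOf z').Coprime (orderOf c) := isP_coprime' hz'p hco
      have e2 : Cn a ⊓ Cn x = Cn (z' * c) ⊓ Cn x := by
        rw [hCa, Cn_mul hcz' hoz'c]
        calc Cn b ⊓ Cn c ⊓ Cn x = (Cn x ⊓ Cn b) ⊓ Cn c := by ac_rfl
          _ = (Cn x ⊓ Cn z') ⊓ Cn c := by rw [e1]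
          _ = _ := by ac_rfl
      rw [← inf_relIndex_right, e2, inf_relIndex_right]
      apply fin
      apply A.H.rel_m hx (hxz'.mul_right (mem_Cn'.1 hcx).symm)
      rw [hcz'.orderOf_mul_eq_mul_orderOf_of_coprime hoz'c]
      exact Nat.Coprime.mul_right hoxz' hoc
  obtain ⟨h1, -⟩ := D1_rel hp main
  obtain ⟨Q, hQle, hQs, hQi⟩ := sylow_in hs (A.ndvd_of_m hs hsn hx)
  apply hQi
  refine (?_ : s ∣ classSize z).trans (index_dvd_of_le (K := Cn z) ?_)
  · rw [hz]; exact hsn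
  · intro y hy
    exact mem_Cn'.2 (h1 z hzx y (hQle hy) hzp (isP_coprime_prime hp hs hps (hQs y hy))).symm

/-- step four c -/
lemma step4c [Finite G] (A : HypA G m n) {x z : G} {p r s : ℕ} (hp : p.Prime) (hpm : p ∣ m)
    (hr : r.Prime) (hrn : r ∣ n) (hs : s.Prime) (hsn : s ∣ n)
    (hxr : IsPElement r x) (hzp : IsPElement p z) (hx : classSize x = m) (hz : classSize z = n)
    (hxz : Commute x z) : s = r := by
  by_contra hsr
  have hps := A.prime_ne hp hpm hsn
  have typ : ∀ t : G, IsPElement s t → t ∉ center G → classSize t = m * n := by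
    intro t ht htc
    rcases A.fa' hs hsn ht htc with h | h
    · exact (A.step4c1 hp hpm hr hrn hs hsn hsr hxr hzp hx hz hxz ht h).elim
    · exact h
  obtain ⟨t0, ht0, ht0c⟩ := Hyp.exists_noncentral_of_dvd hs (g := z) (hz.symm ▸ hsn)
  have : Cn x ⊓ Cn z = ⊤ := by
    apply cover
    intro g
    obtain ⟨t, htg, hts, htc⟩ := exists_noncentral hs (g := g) (h := t0)
      (by rw [typ t0 ht0 ht0c]; exact A.H.dvd_mn g) ht0 ht0c (self_mem_Cn t0)
    obtain ⟨k, hk⟩ := conj_into_elt hs (A.ndvd_of_m hs hsn hx) hts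
    have hgt : k * g * k⁻¹ ∈ Cn (k * t * k⁻¹) := conj_mem_Cn.2 (mem_Cn_comm.1 htg)
    have htyp : classSize (k * t * k⁻¹) = m * n := by rw [classSize_conj, typ t hts htc]
    have hts' := isP_conj k hts
    generalize k * t * k⁻¹ = t' at *
    have hle1 : Cn t' ≤ Cn x := A.H.mn_le htyp (mem_Cn'.1 hk) (isP_coprime hs hr hsr hts' hxr)
    have hrel : ¬ p ∣ (Cn t').relIndex (Cn x) := by
      have h := relIndex_mul_index hle1
      rw [← classSize_def, ← classSize_def, htyp, hx] at h
      have : (Cn t').relIndex (Cn x) = n :=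
        Nat.eq_of_mul_eq_mul_right A.H.mpos (by rw [h, mul_comm])
      rw [this]
      exact fun h => A.H.not_both hp hpm h
    obtain ⟨l, hl, hl'⟩ := conj_into_elt_rel hp hrel hzp (mem_Cn'.2 hxz.symm)
    have hle2 := A.H.mn_le htyp (mem_Cn'.1 hl').symm
      (isP_coprime hs hp hps.symm hts' (isP_conj l hzp))
    refine ⟨l⁻¹ * k, mem_inf.2 ⟨?_, ?_⟩⟩
    · have : l⁻¹ * k * g * (l⁻¹ * k)⁻¹ = l⁻¹ * (k * g * k⁻¹) * l := by simp [mul_assoc]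
      rw [this]
      exact mul_mem (mul_mem (inv_mem hl) (hle1 hgt)) hl
    · have h1 := hle2 hgt
      rw [← conj_mem_Cn (k := l)]
      simpa [mul_assoc] using h1
  apply A.H.noncentral_m hx
  rw [mem_center_iff_Cn, eq_top_iff, ← this]
  exact inf_le_left

end HypA
end BF

namespace BF
open Subgroup
variable {G : Type*} [Group G]

/-- Case A after step four c -/
structure HypB (G : Type*) [Group G] (m n p r : ℕ) : Prop where
  A : HypA G m n
  hp : p.Prime
  hpm : p ∣ m
  hr : r.Prime
  hrn : r ∣ n
  um : ∀ s : ℕ, s.Prime → s ∣ m → s = p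
  un : ∀ s : ℕ, s.Prime → s ∣ n → s = r
  ex : ∃ x z : G, IsPElement r x ∧ IsPElement p z ∧ classSize x = m ∧ classSize z = n ∧ Commute x z

namespace HypB
variable {m n p r : ℕ}

lemma swap (B : HypB G m n p r) : HypB G n m r p where
  A := B.A.swap
  hp := B.hr
  hpm := B.hrn
  hr := B.hp
  hrn := B.hpm
  um := B.un
  un := B.um
  ex := by
    obtain ⟨x, z, h1, h2, h3, h4, h5⟩ := B.ex
    exact ⟨z, x, h2, h1, h4, h3, h5.symm⟩

lemma hpr (B : HypB G m n p r) : p ≠ r := B.A.prime_ne B.hp B.hpm B.hrn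

lemma primary_central [Finite G] (B : HypB G m n p r) {s : ℕ} (hs : s.Prime) (hsp : s ≠ p)
    (hsr : s ≠ r) {c : G} (hc : IsPElement s c) : c ∈ center G := by
  refine B.A.H.central_of_not_dvd hs ?_ hc
  rw [hs.dvd_mul]
  rintro (h | h)
  · exact hsp (B.um s hs h)
  · exact hsr (B.un s hs h)

lemma decomp [Finite G] (B : HypB G m n p r) (g : G) : ∃ a b c : G, IsPElement r a ∧ IsPElement p b ∧
    c ∈ center G ∧ Commute a b ∧ g = a * b * c := by
  obtain ⟨a, d, ha, hd, har, hdr, had, rfl⟩ := exists_decomp B.hr g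
  obtain ⟨b, c, hb, hc, hbp, hcp, hbc, hdeq⟩ := exists_decomp B.hp d
  refine ⟨a, b, c, har, hbp, ?_, ?_, by rw [mul_assoc, ← hdeq]⟩
  · apply mem_of_primary
    intro e he s hs hes
    by_cases h1 : s = p
    · subst h1
      obtain ⟨k, hk⟩ := hes
      have := hcp.of_dvd_right (orderOf_dvd_of_mem_zpowers he)
      rw [hk] at this
      rcases Nat.eq_zero_or_pos k with rfl | hk0
      · rw [pow_zero, orderOf_eq_one_iff] at hk
        rw [hk]; exact one_mem _
      · exact ((Nat.Prime.coprime_iff_not_dvd hs).1 this (dvd_pow_self s hk0.ne')).elim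
    by_cases h2 : s = r
    · subst h2
      obtain ⟨k, hk⟩ := hes
      have := (hdr.of_dvd_right (orderOf_dvd_of_mem_zpowers hc)).of_dvd_right
        (orderOf_dvd_of_mem_zpowers he)
      rw [hk] at this
      rcases Nat.eq_zero_or_pos k with rfl | hk0
      · rw [pow_zero, orderOf_eq_one_iff] at hk
        rw [hk]; exact one_mem _
      · exact ((Nat.Prime.coprime_iff_not_dvd hs).1 this (dvd_pow_self s hk0.ne')).elim
    · exact B.primary_central hs h1 h2 hes
  · have := Cn_le_of_mem_zpowers hb (mem_Cn'.2 had)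
    exact mem_Cn'.1 this

/-- S1 -/
lemma S1 [Finite G] (B : HypB G m n p r) {x : G} (hxr : IsPElement r x) (hx : classSize x = m)
    (hall : ∀ z : G, IsPElement p z → classSize z = n → Commute x z) : False := by
  apply B.A.H.noncentral_m hx
  rw [mem_center_iff_Cn]
  apply cover
  intro g
  obtain ⟨a, b, c, ha, hb, hc, hab, rfl⟩ := B.decomp g
  have key : (∀ k : G, k * b * k⁻¹ ∈ Cn x) → ∃ k, k * (a * b * c) * k⁻¹ ∈ Cn x := by
    intro h
    obtain ⟨k, hk⟩ := conj_into_elt B.hr (B.A.ndvd_of_m B.hr B.hrn hx) ha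
    refine ⟨k, ?_⟩
    have : k * (a * b * c) * k⁻¹ = (k * a * k⁻¹) * (k * b * k⁻¹) * (k * c * k⁻¹) := by
      simp [mul_assoc]
    rw [this]
    exact mul_mem (mul_mem hk (h k)) (center_le_Cn _ (conj_mem_center.2 hc))
  by_cases hbc : b ∈ center G
  · exact key fun k => center_le_Cn _ (conj_mem_center.2 hbc)
  rcases B.A.fa B.hp B.hpm hb hbc with hbn | hbmn
  · exact key fun k => mem_Cn'.2 (hall _ (isP_conj k hb) (by rw [classSize_conj, hbn])).symm
  · have hle := fun (t : G) (ht : t ∈ Cn b) (htr : IsPElement r t) =>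
      B.A.H.mn_le hbmn (mem_Cn'.1 ht).symm (isP_coprime B.hp B.hr B.hpr hb htr)
    obtain ⟨-, z0, -, hz0p, -, hz0, -⟩ := B.ex
    obtain ⟨k, hk⟩ := conj_into_elt B.hp (B.A.ndvd_of_n B.hp B.hpm hz0) hb
    have hz1 := mem_Cn_comm.1 (conj_mem_Cn_iff.1 hk)
    have e : k⁻¹ * z0 * k = k⁻¹ * z0 * k⁻¹⁻¹ := by simp
    rw [e] at hz1
    have hz1p := isP_conj k⁻¹ hz0p
    have hz1n := (classSize_conj z0 k⁻¹).trans hz0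
    generalize k⁻¹ * z0 * k⁻¹⁻¹ = z at *
    obtain ⟨l, -, hl⟩ := lemT B.hr (a := b) (b := z) (x := x) (c := 1) (e := m)
      (by rw [hbmn, hz1n, mul_one]) (fun hd => B.A.H.not_both B.hr hd B.hrn)
      (fun t ht htr => mem_Cn_comm.1 (hle t ht htr hz1)) hxr (mem_Cn'.2 (hall z hz1p hz1n))
    have hla := hle a (mem_Cn'.2 hab) ha hl
    have h2 : l * x * l⁻¹ ∈ Cn (a * b * c) := by
      refine mem_Cn'.2 (Commute.mul_right ((mem_Cn'.1 hla).mul_right (mem_Cn'.1 hl)) ?_)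
      exact (mem_center_iff.1 hc) _
    refine ⟨l⁻¹, ?_⟩
    have := mem_Cn_comm.1 (conj_mem_Cn_iff.1 h2)
    simpa using this

lemma claim1 [Finite G] (B : HypB G m n p r) {u w : G} (hup : IsPElement p u) (hu : classSize u = n)
    (hw : IsPElement r w) (hwc : w ∉ center G) (huw : Commute u w) : classSize w = m := by
  rcases B.A.fa' B.hr B.hrn hw hwc with h | h
  · exact h
  exfalso
  have hle := B.A.H.mn_le h huw.symm (isP_coprime B.hr B.hp B.hpr.symm hw hup)
  refine B.swap.S1 hup hu (fun x hxr hx => ?_)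
  obtain ⟨k, hk⟩ := conj_into_elt B.hr (B.A.ndvd_of_m B.hr B.hrn hx) hw
  have h1 := hle (mem_Cn_comm.1 (conj_mem_Cn_iff.1 hk))
  have h2 := conj_comm_of_coprime (a := k⁻¹ * x * k) (b := u) (by
    have e : k⁻¹ * x * k = k⁻¹ * x * k⁻¹⁻¹ := by simp
    rw [e, classSize_conj, hx, hu]; exact B.A.H.hmn) (mem_Cn'.1 h1) k
  have e : k * (k⁻¹ * x * k) * k⁻¹ = x := by simp [mul_assoc]
  rw [e] at h2
  exact h2.symm

lemma claim2 [Finite G] (B : HypB G m n p r) {v : G} (hvp : IsPElement p v) :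
    classSize v ≠ m * n := by
  intro hv
  obtain ⟨x, z, hxr, hzp, hx, hz, hxz⟩ := B.ex
  have hmn := B.A.mul_mn hxz (isP_coprime B.hr B.hp B.hpr.symm hxr hzp) hx.symm.dvd hz.symm.dvd
  obtain ⟨w, hwv, hwr, hwc⟩ := exists_noncentral B.hr (g := v) (h := x * z) (t := x)
    (by rw [hv, hmn]) hxr (B.A.H.noncentral_m hx)
    (mem_Cn'.2 ((Commute.refl x).mul_right hxz))
  have hle := B.A.H.mn_le hv (mem_Cn'.1 hwv).symm (isP_coprime B.hp B.hr B.hpr hvp hwr)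
  have key : ∀ z' : G, IsPElement p z' → classSize z' = n →
      ∃ k, Commute (k⁻¹ * z' * k⁻¹⁻¹) w := by
    intro z' hzp' hz'
    obtain ⟨k, hk⟩ := conj_into_elt B.hp (B.A.ndvd_of_n B.hp B.hpm hz') hvp
    have h1 := hle (mem_Cn_comm.1 (conj_mem_Cn_iff.1 hk))
    refine ⟨k, ?_⟩
    rw [inv_inv]
    exact mem_Cn'.1 h1
  have hwm : classSize w = m := by
    obtain ⟨k, hk⟩ := key z hzp hz
    exact B.claim1 (isP_conj k⁻¹ hzp) (by rw [classSize_conj, hz]) hwr hwc hk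
  refine B.S1 hwr hwm (fun z' hzp' hz' => ?_)
  obtain ⟨k, hk⟩ := key z' hzp' hz'
  have h2 := conj_comm_of_coprime (by
    rw [classSize_conj, hz', hwm]; exact B.A.H.hmn.symm) hk k
  have e : k * (k⁻¹ * z' * k⁻¹⁻¹) * k⁻¹ = z' := by simp [mul_assoc]
  rw [e] at h2
  exact h2.symm

lemma typ_p [Finite G] (B : HypB G m n p r) {v : G} (hvp : IsPElement p v) (hvc : v ∉ center G) :
    classSize v = n :=
  (B.A.fa B.hp B.hpm hvp hvc).resolve_right (B.claim2 hvp)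

lemma typ_r [Finite G] (B : HypB G m n p r) {v : G} (hvp : IsPElement r v) (hvc : v ∉ center G) :
    classSize v = m := B.swap.typ_p hvp hvc

lemma star [Finite G] (B : HypB G m n p r) {a b : G} (ha : IsPElement p a) (hb : IsPElement r b)
    (hab : Commute a b) (k : G) : Commute a (k * b * k⁻¹) := by
  by_cases hac : a ∈ center G
  · exact ((mem_center_iff.1 hac) _).symm
  by_cases hbc : b ∈ center G
  · exact (mem_center_iff.1 (conj_mem_center.2 hbc)) _
  · refine (conj_comm_of_coprime ?_ hab.symm k).symm
    rw [B.typ_p ha hac, B.typ_r hb hbc]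
    exact B.A.H.hmn

/-- elements commuting with all conjugates of `w` -/
def K (w : G) : Subgroup G := ⨅ k : G, Cn (k * w * k⁻¹)

lemma mem_K {w g : G} : g ∈ K w ↔ ∀ k : G, Commute g (k * w * k⁻¹) := by
  unfold K
  rw [mem_iInf]
  exact forall_congr' fun k => mem_Cn'

lemma K_normal (w : G) : (K w).Normal := by
  refine ⟨fun x hx g => ?_⟩
  rw [mem_K] at *
  intro k
  have := hx (g⁻¹ * k)
  rw [← mem_Cn', conj_mem_Cn_iff, mem_Cn']
  simpa [mul_assoc] using this

lemma S2_aux [Finite G] (B : HypB G m n p r) {N : Subgroup G} (hN : N.Normal)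
    (hmin : ∀ M : Subgroup G, M.Normal → M ≤ N → ¬ M ≤ center G → N ≤ M)
    {e : G} (heN : e ∈ N) (hep : IsPElement p e) (hec : e ∉ center G) : False := by
  have hK : ∀ w : G, ¬ (K w ⊓ N ≤ center G) → ∀ y ∈ N, Commute w y := by
    intro w hw y hy
    have hn := K_normal w
    have := hmin (K w ⊓ N) inferInstance inf_le_right hw hy
    have h1 := mem_K.1 this.1 1
    simp only [one_mul, inv_one, mul_one] at h1
    exact h1.symm
  have claim0 : ∀ w e1 : G, IsPElement r w → IsPElement p e1 → e1 ∉ center G → e1 ∈ N →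
      Commute w e1 → ∀ y ∈ N, Commute w y := by
    intro w e1 hw he1 he1c he1N hwe
    apply hK
    intro hle
    exact he1c (hle ⟨mem_K.2 (fun k => B.star he1 hw hwe.symm k), he1N⟩)
  obtain ⟨x, z0, hxr, hzp0, hx, hz0, hxz⟩ := B.ex
  have hmn := B.A.mul_mn hxz (isP_coprime B.hr B.hp B.hpr.symm hxr hzp0) hx.symm.dvd hz0.symm.dvd
  obtain ⟨x0, hx0e, hx0r, hx0c⟩ := exists_noncentral B.hr (g := e) (h := x * z0) (t := x)
    (by rw [hmn]; exact B.A.H.dvd_mn e) hxr (B.A.H.noncentral_m hx)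
    (mem_Cn'.2 ((Commute.refl x).mul_right hxz))
  have hx0C := claim0 x0 e hx0r hep hec heN (mem_Cn'.1 hx0e)
  refine B.S1 hx0r (B.typ_r hx0r hx0c) (fun z hzp hz => ?_)
  -- conj-invariance of commuting
  have back : ∀ k, Commute (k * x0 * k⁻¹) z → Commute x0 z := by
    intro k hk
    have := B.star hzp (isP_conj k hx0r) hk.symm k⁻¹
    have e : k⁻¹ * (k * x0 * k⁻¹) * k⁻¹⁻¹ = x0 := by simp [mul_assoc]
    rw [e] at this
    exact this.symm
  obtain ⟨k, hk⟩ := conj_into_elt B.hp (B.A.ndvd_of_n B.hp B.hpm hz) hep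
  have he'N := hN.conj_mem e heN k
  have he'p := isP_conj k hep
  have he'c : k * e * k⁻¹ ∉ center G := fun h => hec (conj_mem_center.1 h)
  generalize k * e * k⁻¹ = e' at *
  have he'n := B.typ_p he'p he'c
  have he'z : Commute e' z := mem_Cn'.1 hk
  have hx0e' : x0 ∈ Cn e' := mem_Cn'.2 (hx0C e' he'N)
  by_cases ha : ∀ t ∈ Cn z, IsPElement r t → ∀ y ∈ N, Commute t y
  · obtain ⟨l, -, hl⟩ := lemT B.hr (a := z) (b := e') (x := x0) (c := 1) (e := 1)
      (by rw [hz, he'n, mul_comm]) B.hr.not_dvd_one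
      (fun t ht htr => mem_Cn'.2 (ha t ht htr e' he'N)) hx0r hx0e'
    exact back l (mem_Cn'.1 hl)
  push Not at ha
  obtain ⟨w, hwz, hwr, y, hyN, hwy⟩ := ha
  have hKw : K w ⊓ N ≤ center G := by
    by_contra hcon
    exact hwy (hK w hcon y hyN)
  have hzK : z ∈ K w := mem_K.2 (fun k => B.star hzp hwr (mem_Cn'.1 hwz).symm k)
  by_cases hez : e' * z ∈ center G
  · have h1 : Commute x0 (e' * z) := (mem_center_iff.1 hez) x0
    have h2 : z = e'⁻¹ * (e' * z) := by simp
    rw [h2]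
    exact ((mem_Cn'.1 hx0e').inv_right).mul_right h1
  have hezp := isP_mul B.hp he'p hzp he'z
  have hezn := B.typ_p hezp hez
  by_cases hb : ∀ t ∈ Cn (e' * z), IsPElement r t → ∀ y ∈ N, Commute t y
  · obtain ⟨l, hl1, hl⟩ := lemT B.hr (a := e' * z) (b := e') (x := x0) (c := 1) (e := 1)
      (by rw [hezn, he'n, mul_comm]) B.hr.not_dvd_one
      (fun t ht htr => mem_Cn'.2 (hb t ht htr e' he'N)) hx0r hx0e'
    refine back l ?_
    have h1 : l * x0 * l⁻¹ ∈ Cn e' := mul_mem (mul_mem hl1 hx0e') (inv_mem hl1)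
    have h2 : z = e'⁻¹ * (e' * z) := by simp
    rw [h2]
    exact ((mem_Cn'.1 h1).inv_right).mul_right (mem_Cn'.1 hl)
  push Not at hb
  obtain ⟨w', hw'z, hw'r, y', hyN', hwy'⟩ := hb
  exfalso
  apply hwy'
  refine claim0 w' e' hw'r he'p he'c he'N ?_ y' hyN'
  have hd1 : w' * z * w'⁻¹ * z⁻¹ = w' * e'⁻¹ * w'⁻¹ * e' := by
    have h := mem_Cn.1 hw'z
    have h2 : w' * z = w' * e'⁻¹ * (e' * z) := by simp [mul_assoc]
    have h3 : (e' * z) * w'⁻¹ = w'⁻¹ * (e' * z) := ((mem_Cn'.1 hw'z).inv_left).eq.symm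
    calc w' * z * w'⁻¹ * z⁻¹ = w' * e'⁻¹ * ((e' * z) * w'⁻¹) * z⁻¹ := by rw [h2]; simp [mul_assoc]
      _ = _ := by rw [h3]; simp [mul_assoc]
  have hdK : w' * z * w'⁻¹ * z⁻¹ ∈ K w :=
    mul_mem ((K_normal w).conj_mem z hzK w') (inv_mem hzK)
  have hdN : w' * e'⁻¹ * w'⁻¹ * e' ∈ N :=
    mul_mem (hN.conj_mem _ (inv_mem he'N) w') he'N
  have hdZ := hKw ⟨hdK, hd1 ▸ hdN⟩
  have := comm_of_central (a := w') (b := e'⁻¹) hdZ (by rw [hd1]; simp [mul_assoc])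
    (isP_coprime B.hr B.hp B.hpr.symm hw'r (isP_inv he'p))
  simpa using this.inv_right

lemma false [Finite G] (B : HypB G m n p r) : False := by
  have hfin : {N : Subgroup G | N.Normal ∧ ¬ N ≤ center G}.Finite := Set.toFinite _
  obtain ⟨N, ⟨hN, hNc⟩, hmin⟩ := hfin.exists_minimal ⟨⊤, inferInstance, fun h => by
    obtain ⟨x, z, -, -, hx, -⟩ := B.ex
    exact B.A.H.noncentral_m hx (h (mem_top x))⟩
  have hmin' : ∀ M : Subgroup G, M.Normal → M ≤ N → ¬ M ≤ center G → N ≤ M :=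
    fun M h1 h2 h3 => hmin ⟨h1, h3⟩ h2
  obtain ⟨g, hgN, hgc⟩ := SetLike.not_le_iff_exists.1 hNc
  apply hgc
  apply mem_of_primary
  intro a ha s hs has
  by_contra hac
  have haN : a ∈ N := (zpowers_le.2 hgN) ha
  by_cases h1 : s = p
  · subst h1
    exact B.S2_aux hN hmin' haN has hac
  by_cases h2 : s = r
  · subst h2
    exact B.swap.S2_aux hN hmin' haN has hac
  exact hac (B.primary_central hs h1 h2 has)

end HypB

lemma HypA.false [Finite G] {m n : ℕ} (A : HypA G m n) : False := by
  obtain ⟨x, z, p, r, hp, hpm, hr, hrn, hxr, hzp, hx, hz, hxz⟩ := A.step4b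
  have B : HypB G m n p r :=
    { A := A, hp := hp, hpm := hpm, hr := hr, hrn := hrn
      um := fun s hs hsm =>
        A.swap.step4c hr hrn hp hpm hs hsm hzp hxr hz hx hxz.symm
      un := fun s hs hsn => A.step4c hp hpm hr hrn hs hsn hxr hzp hx hz hxz
      ex := ⟨x, z, hxr, hzp, hx, hz, hxz⟩ }
  exact B.false

/-- Case C data -/
lemma Hyp.caseC [Finite G] {m n : ℕ} (H : Hyp G m n) :
    ∃ (x y : G) (p q : ℕ), p.Prime ∧ p ∣ m ∧ q.Prime ∧ q ∣ n ∧ IsPElement p x ∧ IsPElement q y ∧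
      classSize x = m ∧ classSize y = n ∧ Commute x y := by
  have key : ∃ (x y : G) (p q : ℕ), p.Prime ∧ p ∣ m ∧ q.Prime ∧ q ∣ n ∧ IsPElement p x ∧
      IsPElement q y ∧ classSize x = m ∧ classSize y = n := by
    obtain ⟨x, p, hp, hxp, hx⟩ := H.exists_primary_m
    obtain ⟨y, q, hq, hyq, hy⟩ := H.swap.exists_primary_m
    have hpd : p ∣ m ∨ p ∣ n := by
      by_contra hcon
      exact H.noncentral_m hx (H.central_of_not_dvd hp (by rwa [hp.dvd_mul]) hxp)
    have hqd : q ∣ m ∨ q ∣ n := by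
      by_contra hcon
      exact H.noncentral_n hy (H.central_of_not_dvd hq (by rwa [hq.dvd_mul]) hyq)
    by_cases h1 : ∃ (x : G) (p : ℕ), p.Prime ∧ p ∣ m ∧ IsPElement p x ∧ classSize x = m
    · obtain ⟨x, p, hp, hpm, hxp, hx⟩ := h1
      rcases hqd with h | h
      · exact (H.step2 hp hpm hq h hxp hx hyq hy).elim
      · exact ⟨x, y, p, q, hp, hpm, hq, h, hxp, hyq, hx, hy⟩
    by_cases h2 : ∃ (x : G) (p : ℕ), p.Prime ∧ p ∣ n ∧ IsPElement p x ∧ classSize x = n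
    · obtain ⟨y, q, hq, hqn, hyq, hy⟩ := h2
      rcases hpd with h | h
      · exact (h1 ⟨x, p, hp, h, hxp, hx⟩).elim
      · exact (H.swap.step2 hq hqn hp h hyq hy hxp hx).elim
    · exact (HypA.false ⟨H, fun r x hr hrm hxr hx => h1 ⟨x, r, hr, hrm, hxr, hx⟩,
        fun r x hr hrm hxr hx => h2 ⟨x, r, hr, hrm, hxr, hx⟩⟩).elim
  obtain ⟨x, y, p, q, hp, hpm, hq, hqn, hxp, hyq, hx, hy⟩ := key
  obtain ⟨k, hk⟩ := conj_into_elt hp (H := Cn y) (by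
    intro hd; change p ∣ classSize y at hd; rw [hy] at hd; exact H.not_both hp hpm hd) hxp
  exact ⟨k * x * k⁻¹, y, p, q, hp, hpm, hq, hqn, isP_conj k hxp, hyq, by rw [classSize_conj, hx],
    hy, mem_Cn'.1 hk⟩

end BF

namespace BF
open Subgroup
variable {G : Type*} [Group G]

lemma norm_arg {A : Type*} [CommGroup A] {l : ℕ} (hl : l.Prime) (α β : MulAut A)
    (hc : Commute α β) (hα : α ^ l = 1) (Z0 : Subgroup A)
    (h1 : ∀ w, ∏ k ∈ Finset.range l, (α ^ k) w ∈ Z0)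
    (h2 : ∀ i : ℕ, i < l → ∀ w, ∏ k ∈ Finset.range l, ((α ^ i * β) ^ k) w ∈ Z0) (v : A) :
    v ^ l ∈ Z0 := by
  have e1 : ∀ i k : ℕ, (α ^ i * β) ^ k = α ^ (i * k) * β ^ k := by
    intro i k
    rw [(hc.pow_left i).mul_pow, pow_mul]
  have h3 : ∏ i ∈ Finset.range l, ∏ k ∈ Finset.range l, ((α ^ i * β) ^ k) v ∈ Z0 :=
    prod_mem fun i hi => h2 i (Finset.mem_range.1 hi) v
  rw [Finset.prod_comm] at h3
  obtain ⟨l', rfl⟩ : ∃ l', l = l' + 1 := ⟨l - 1, by have := hl.pos; omega⟩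
  rw [Finset.prod_range_succ'] at h3
  have h4 : ∏ i ∈ Finset.range (l' + 1), ((α ^ i * β) ^ 0) v = v ^ (l' + 1) := by simp
  rw [h4] at h3
  refine (mul_mem_cancel_left (prod_mem fun k hk => ?_)).1 h3
  have hk := Finset.mem_range.1 hk
  have h5 : ∏ i ∈ Finset.range (l' + 1), ((α ^ i * β) ^ (k + 1)) v =
      ∏ i ∈ Finset.range (l' + 1), (α ^ i) ((β ^ (k + 1)) v) := by
    have hcop : Nat.Coprime (l' + 1) (k + 1) := by
      rw [Nat.Prime.coprime_iff_not_dvd hl]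
      intro hd
      have := Nat.le_of_dvd (by omega) hd
      omega
    have hmaps : Set.MapsTo (fun i => i * (k + 1) % (l' + 1)) (Finset.range (l' + 1) : Set ℕ)
        (Finset.range (l' + 1) : Set ℕ) := by
      intro i _
      simp only [Finset.coe_range, Set.mem_Iio]
      exact Nat.mod_lt _ (by omega)
    have hinj : Set.InjOn (fun i => i * (k + 1) % (l' + 1)) (Finset.range (l' + 1) : Set ℕ) := by
      intro i hi j hj hij
      simp only [Finset.coe_range, Set.mem_Iio] at hi hj
      have : i * (k + 1) ≡ j * (k + 1) [MOD (l' + 1)] := hij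
      have := Nat.ModEq.cancel_right_of_coprime hcop this
      exact Nat.ModEq.eq_of_lt_of_lt this hi hj
    refine Finset.prod_nbij (fun i => i * (k + 1) % (l' + 1)) ?_ hinj
      (Finset.surjOn_of_injOn_of_card_le _ hmaps hinj le_rfl) ?_
    · intro i hi
      exact Finset.mem_range.2 (Nat.mod_lt _ (by omega))
    · intro i hi
      rw [e1, MulAut.mul_apply, pow_eq_pow_mod (i * (k + 1)) hα]
  rw [h5]
  exact h1 _

/-- Ito hypothesis -/
structure Ito (G : Type*) [Group G] (n q s : ℕ) : Prop where
  all : ∀ g : G, classSize g = 1 ∨ classSize g = n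
  ex : ∃ g : G, classSize g = n
  hn : 1 < n
  hq : q.Prime
  hs : s.Prime
  hqs : q ≠ s
  hqn : q ∣ n
  hsn : s ∣ n

namespace Ito
variable {n q s : ℕ}

lemma typ (I : Ito G n q s) {g : G} (hg : g ∉ center G) : classSize g = n :=
  (I.all g).resolve_left (fun h => hg (classSize_eq_one.1 h))

lemma Cn_eq [Finite G] (I : Ito G n q s) {g h : G} (hg : g ∉ center G) (hh : h ∉ center G)
    (hle : Cn g ≤ Cn h) : Cn g = Cn h :=
  eq_of_le_of_index hle (by rw [← classSize_def, ← classSize_def, I.typ hg, I.typ hh])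

lemma exl [Finite G] (I : Ito G n q s) {l : ℕ} (hl : l.Prime) (hln : l ∣ n) {g : G}
    (hg : g ∉ center G) : ∃ t ∈ Cn g, IsPElement l t ∧ t ∉ center G := by
  obtain ⟨t, ht, htc⟩ := Hyp.exists_noncentral_of_dvd hl (g := g) (by rwa [I.typ hg])
  exact exists_noncentral hl (g := g) (h := t) (by rw [I.typ hg, I.typ htc]) ht htc (self_mem_Cn t)

lemma TI_cop [Finite G] (I : Ito G n q s) {a b : G} (ha : a ∉ center G) (hb : b ∉ center G)
    (hab : Commute a b) (ho : (orderOf a).Coprime (orderOf b)) : Cn a = Cn b := by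
  have h := Cn_mul hab ho
  have h1 : Cn (a * b) ≤ Cn a := by rw [h]; exact inf_le_left
  have h2 : Cn (a * b) ≤ Cn b := by rw [h]; exact inf_le_right
  have hc : a * b ∉ center G := by
    intro hc
    rw [mem_center_iff_Cn] at hc
    rw [hc, top_le_iff, ← mem_center_iff_Cn] at h1
    exact ha h1
  rw [← I.Cn_eq hc ha h1, I.Cn_eq hc hb h2]

lemma exists_other (I : Ito G n q s) (l : ℕ) : ∃ l' : ℕ, l'.Prime ∧ l' ∣ n ∧ l' ≠ l := by
  by_cases h : q = l
  · exact ⟨s, I.hs, I.hsn, fun h' => I.hqs (h.trans h'.symm)⟩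
  · exact ⟨q, I.hq, I.hqn, h⟩

lemma exists_primary [Finite G] (I : Ito G n q s) {g : G} (hg : g ∉ center G) :
    ∃ a, ∃ l : ℕ, l.Prime ∧ IsPElement l a ∧ a ∉ center G ∧ Cn g = Cn a := by
  by_contra hcon
  push Not at hcon
  apply hg
  apply mem_of_primary
  intro a ha p hp hap
  by_contra hac
  exact hcon a p hp hap hac (I.Cn_eq hg hac (Cn_le_of_mem_zpowers ha))

lemma TI [Finite G] (I : Ito G n q s) {g h : G} (hg : g ∉ center G) (hh : h ∉ center G)
    (hgh : Commute g h) : Cn g = Cn h := by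
  obtain ⟨a, l1, hl1, ha, hac, ega⟩ := I.exists_primary hg
  obtain ⟨b, l2, hl2, hb, hbc, ehb⟩ := I.exists_primary hh
  have hab : Commute a b := by
    have h1 : h ∈ Cn g := mem_Cn'.2 hgh.symm
    rw [ega] at h1
    have h2 := mem_Cn_comm.1 h1
    rw [ehb] at h2
    exact mem_Cn'.1 h2
  rw [ega, ehb]
  by_cases hl : l1 = l2
  · subst hl
    obtain ⟨l', hl', hln', hne⟩ := I.exists_other l1
    obtain ⟨v, hv, hvl, hvc⟩ := I.exl hl' hln' hac
    have e1 : Cn a = Cn v := I.TI_cop hac hvc (mem_Cn'.1 hv).symm (isP_coprime hl1 hl' hne.symm ha hvl)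
    have hbv : b ∈ Cn v := e1 ▸ mem_Cn'.2 hab.symm
    rw [e1]
    exact I.TI_cop hvc hbc (mem_Cn'.1 hbv).symm (isP_coprime hl' hl1 hne hvl hb)
  · exact I.TI_cop hac hbc hab (isP_coprime hl1 hl2 hl ha hb)

lemma abel [Finite G] (I : Ito G n q s) {g : G} (hg : g ∉ center G) {c d : G} (hc : c ∈ Cn g)
    (hd : d ∈ Cn g) : Commute c d := by
  by_cases hcc : c ∈ center G
  · exact ((mem_center_iff.1 hcc) d).symm
  · have := I.TI hcc hg (mem_Cn'.1 hc)
    rw [← this] at hd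
    exact (mem_Cn'.1 hd).symm

/-- if a conjugate of a noncentral element of `C(g)` lies in `C(g)`, normalizes `C(g)` -/
lemma norm_of_conj [Finite G] (I : Ito G n q s) {g t x : G} (hg : g ∉ center G) (ht : t ∈ Cn g)
    (htc : t ∉ center G) (hx : x * t * x⁻¹ ∈ Cn g) : x ∈ normalizer (Cn g : Set G) := by
  have e1 : Cn t = Cn g := I.TI htc hg (mem_Cn'.1 ht)
  have e2 : Cn (x * t * x⁻¹) = Cn g :=
    I.TI (fun h => htc (conj_mem_center.1 h)) hg (mem_Cn'.1 hx)
  rw [mem_normalizer_iff]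
  intro y
  nth_rewrite 1 [← e1]
  rw [← e2, conj_mem_Cn]

/-- first divisibility step -/
lemma two_a [Finite G] (I : Ito G n q s) {l : ℕ} (hl : l.Prime) (hln : l ∣ n) {g : G}
    (hg : g ∉ center G) : l ∣ (Cn g).relIndex (normalizer (Cn g : Set G)) := by
  have := Fact.mk hl
  obtain ⟨B, hB, hBl, hBi⟩ := exists_sylow_sub hl (Cn g)
  obtain ⟨t, ht, htl, htc⟩ := I.exl hl hln hg
  have htB : t ∈ B := by
    obtain ⟨k, hk, hk'⟩ := conj_into_elt_rel hl hBi htl ht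
    rw [(I.abel hg hk ht).eq] at hk'
    simpa using hk'
  have hBp : IsPGroup l B := IsPGroup.iff_orderOf.2 (fun x => isP_coe.1 (hBl x x.2))
  obtain ⟨e, he⟩ := IsPGroup.iff_card.1 hBp
  have hdvd : l ^ (e + 1) ∣ Nat.card G := by
    rw [← card_mul_index B, he, pow_succ]
    apply mul_dvd_mul_left
    rw [← relIndex_mul_index hB, ← classSize_def, I.typ hg]
    exact hln.mul_left _
  have h1 : l ∣ B.relIndex (normalizer (B : Set G)) := Sylow.prime_dvd_card_quotient_normalizer hdvd he
  have hle : Cn g ≤ normalizer (B : Set G) := by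
    intro c hc
    apply centralizer_le_normalizer
    rw [mem_centralizer_iff]
    intro b hb
    exact I.abel hg (hB hb) hc
  have hle2 : normalizer (B : Set G) ≤ normalizer (Cn g : Set G) := by
    intro x hx
    exact I.norm_of_conj hg ht htc (hB ((mem_normalizer_iff.1 hx t).1 htB))
  rw [← relIndex_mul_relIndex B _ _ hB hle] at h1
  have h2 := ((Nat.Prime.dvd_mul hl).1 h1).resolve_left hBi
  rw [← relIndex_mul_relIndex (Cn g) _ _ hle hle2]
  exact h2.mul_right _

/-- an element of `S` central of order `l` modulo the center of `G` -/
lemma exists_y [Finite G] {l : ℕ} (hl : l.Prime) {S : Subgroup G} (hS : ∀ x ∈ S, IsPElement l x)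
    (hSc : ¬ S ≤ center G) : ∃ y ∈ S, y ∉ center G ∧ y ^ l ∈ center G ∧
      ∀ t ∈ S, t * y * t⁻¹ * y⁻¹ ∈ center G := by
  have := Fact.mk hl
  have hSp : IsPGroup l S := IsPGroup.iff_orderOf.2 (fun x => isP_coe.1 (hS x x.2))
  have hn : ((center G).subgroupOf S).Normal := inferInstance
  have hnt : Nontrivial (S ⧸ (center G).subgroupOf S) := by
    obtain ⟨x, hx, hxc⟩ := SetLike.not_le_iff_exists.1 hSc
    refine ⟨((⟨x, hx⟩ : S) : S ⧸ (center G).subgroupOf S), 1, fun h => hxc ?_⟩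
    rw [QuotientGroup.eq_one_iff] at h
    exact h
  have hQ : IsPGroup l (S ⧸ (center G).subgroupOf S) := hSp.to_quotient _
  have hZ := hQ.center_nontrivial
  have hZp : IsPGroup l (center (S ⧸ (center G).subgroupOf S)) := hQ.to_subgroup _
  have hd : l ∣ Nat.card (center (S ⧸ (center G).subgroupOf S)) := by
    obtain ⟨e, he, hc⟩ := (hZp.nontrivial_iff_card).1 hZ
    rw [hc]
    exact dvd_pow_self l he.ne'
  obtain ⟨⟨w, hw⟩, ho⟩ := exists_prime_orderOf_dvd_card' l hd
  obtain ⟨y, rfl⟩ := QuotientGroup.mk_surjective w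
  rw [Subgroup.orderOf_mk] at ho
  refine ⟨y, y.2, fun h => ?_, ?_, fun t ht => ?_⟩
  · have : ((y : S) : S ⧸ (center G).subgroupOf S) = 1 := (QuotientGroup.eq_one_iff y).2 h
    rw [this, orderOf_one] at ho
    exact hl.one_lt.ne ho
  · have := pow_orderOf_eq_one ((y : S) : S ⧸ (center G).subgroupOf S)
    rw [ho, ← QuotientGroup.mk_pow, QuotientGroup.eq_one_iff] at this
    exact this
  · have h1 := (mem_center_iff.1 hw) ((⟨t, ht⟩ : S) : S ⧸ (center G).subgroupOf S)
    have h2 : (((⟨t, ht⟩ : S) * y * (⟨t, ht⟩ : S)⁻¹ * y⁻¹ : S) : S ⧸ (center G).subgroupOf S) = 1 := by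
      simp only [QuotientGroup.mk_mul, QuotientGroup.mk_inv]
      rw [h1]; simp
    rw [QuotientGroup.eq_one_iff] at h2
    exact h2

lemma normHom_apply {Y : Subgroup G} (T : normalizer (Y : Set G)) (w : Y) :
    ((Y.normalizerMonoidHom T w : Y) : G) = T * w * (T : G)⁻¹ := rfl

/-- second divisibility step -/
lemma two_b [Finite G] (I : Ito G n q s) {l : ℕ} (hl : l.Prime) : ¬ l ^ 2 ∣ n := by
  intro hl2
  have hln : l ∣ n := (dvd_pow_self l two_ne_zero).trans hl2
  obtain ⟨g0, hg0⟩ := I.ex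
  have hg0c : g0 ∉ center G := by
    rw [← classSize_eq_one, hg0]; exact I.hn.ne'
  obtain ⟨S, hS, hSi⟩ := exists_sylow (G := G) hl
  have hSc : ¬ S ≤ center G := by
    intro h
    apply hSi
    refine (?_ : l ∣ classSize g0).trans (index_dvd_of_le (h.trans (center_le_Cn g0)))
    rwa [hg0]
  obtain ⟨y, hyS, hyc, hyl, hyt⟩ := exists_y hl hS hSc
  have hbig : l ^ 2 ∣ (Cn y).relIndex S := by
    have h1 : (Cn y).index ∣ (Cn y ⊓ S).index := index_dvd_of_le inf_le_left
    rw [← classSize_def, I.typ hyc, ← relIndex_mul_index (inf_le_right : Cn y ⊓ S ≤ S),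
      inf_relIndex_right] at h1
    refine Nat.Coprime.dvd_of_dvd_mul_right ?_ (hl2.trans h1)
    exact Nat.Coprime.pow_left _ ((Nat.Prime.coprime_iff_not_dvd hl).2 hSi)
  -- S normalizes Y
  have hSN : S ≤ normalizer (Cn y : Set G) := by
    intro t ht
    refine I.norm_of_conj hyc (self_mem_Cn y) hyc ?_
    have : t * y * t⁻¹ = (t * y * t⁻¹ * y⁻¹) * y := by simp
    rw [this]
    exact mul_mem (center_le_Cn _ (hyt t ht)) (self_mem_Cn y)
  -- powers
  have hpow : ∀ t ∈ S, t ∉ Cn y → t ^ l ∈ center G := by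
    intro t ht hty
    by_contra hcon
    obtain ⟨d, hd⟩ : ∃ d, d = t * y * t⁻¹ * y⁻¹ := ⟨_, rfl⟩
    have hdZ : d ∈ center G := hd ▸ hyt t ht
    have hdc : ∀ g, Commute d g := fun g => ((mem_center_iff.1 hdZ) g).symm
    have e0 : t * y * t⁻¹ = d * y := by rw [hd]; simp
    have e1 : d ^ l = 1 := by
      have h1 : (t * y * t⁻¹) ^ l = y ^ l := by
        rw [conj_pow]
        rw [(mem_center_iff.1 hyl) t]; simp
      rw [e0, (hdc y).mul_pow] at h1
      simpa using h1
    have h2 : ∀ k : ℕ, t ^ k * y * (t ^ k)⁻¹ = d ^ k * y := by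
      intro k
      induction k with
      | zero => simp
      | succ k ih =>
        calc t ^ (k + 1) * y * (t ^ (k + 1))⁻¹ = t * (t ^ k * y * (t ^ k)⁻¹) * t⁻¹ := by
              rw [pow_succ']; simp [mul_assoc]
          _ = t * d ^ k * y * t⁻¹ := by rw [ih]; simp [mul_assoc]
          _ = d ^ k * (t * y * t⁻¹) := by
              rw [← ((hdc t).pow_left k).eq]; simp [mul_assoc]
          _ = _ := by rw [e0, ← mul_assoc, ← pow_succ]
    have h3 : Commute (t ^ l) y := by
      have := h2 l
      rw [e1, one_mul] at this
      exact mul_inv_eq_iff_eq_mul.1 this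
    have htc : t ∉ center G := fun h => hty (center_le_Cn y h)
    have h4 := I.TI hcon hyc h3
    apply hty
    rw [← h4]
    exact mem_Cn'.2 ((Commute.refl t).pow_right l)
  -- commutators
  have hcomm : ∀ t1 ∈ S, ∀ t2 ∈ S, (t2 * t1)⁻¹ * (t1 * t2) ∈ Cn y := by
    intro t1 h1 t2 h2
    obtain ⟨d1, hd1⟩ : ∃ d, d = t1 * y * t1⁻¹ * y⁻¹ := ⟨_, rfl⟩
    obtain ⟨d2, hd2⟩ : ∃ d, d = t2 * y * t2⁻¹ * y⁻¹ := ⟨_, rfl⟩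
    have hdc1 : ∀ g, g * d1 = d1 * g := fun g => (mem_center_iff.1 (hd1 ▸ hyt t1 h1 : d1 ∈ center G)) g
    have hdc2 : ∀ g, g * d2 = d2 * g := fun g => (mem_center_iff.1 (hd2 ▸ hyt t2 h2 : d2 ∈ center G)) g
    have e1 : t1 * y = d1 * y * t1 := by rw [hd1]; simp
    have e2 : t2 * y = d2 * y * t2 := by rw [hd2]; simp
    have f1 : t1 * t2 * y = d1 * d2 * y * (t1 * t2) := by
      calc t1 * t2 * y = t1 * (t2 * y) := by simp [mul_assoc]
        _ = (t1 * d2) * y * t2 := by rw [e2]; simp [mul_assoc]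
        _ = d2 * (t1 * y) * t2 := by rw [hdc2]; simp [mul_assoc]
        _ = (d2 * d1) * y * (t1 * t2) := by rw [e1]; simp [mul_assoc]
        _ = _ := by rw [hdc1]
    have f2 : t2 * t1 * y = d1 * d2 * y * (t2 * t1) := by
      calc t2 * t1 * y = t2 * (t1 * y) := by simp [mul_assoc]
        _ = (t2 * d1) * y * t1 := by rw [e1]; simp [mul_assoc]
        _ = d1 * (t2 * y) * t1 := by rw [hdc1]; simp [mul_assoc]
        _ = _ := by rw [e2]; simp [mul_assoc]
    rw [mem_Cn]
    have g1 : (t2 * t1)⁻¹ * (d1 * d2 * y) = y * (t2 * t1)⁻¹ := by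
      rw [inv_mul_eq_iff_eq_mul, ← mul_assoc, eq_mul_inv_iff_mul_eq, f2]
    rw [mul_assoc, f1, ← mul_assoc, g1, mul_assoc]
  -- pick t1
  have hl1 := hl.one_lt
  have hrelne : (Cn y).relIndex S ≠ 0 := FiniteIndex.index_ne_zero
  have hge : l ^ 2 ≤ (Cn y).relIndex S := Nat.le_of_dvd (Nat.pos_of_ne_zero hrelne) hbig
  have : ∃ t1 ∈ S, t1 ∉ Cn y := by
    by_contra hcon
    push Not at hcon
    have : (Cn y).relIndex S = 1 := relIndex_eq_one.2 hcon
    rw [this] at hge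
    nlinarith
  obtain ⟨t1, ht1S, ht1⟩ := this
  have : ∃ t2 ∈ S, ∀ i < l, t1 ^ i * t2 ∉ Cn y := by
    by_contra hcon
    push Not at hcon
    let f : Fin l → S ⧸ (Cn y).subgroupOf S := fun i => (((⟨t1, ht1S⟩ : S) ^ (i : ℕ) : S) : S ⧸ _)
    have hf : Function.Surjective f := by
      intro a
      induction a using QuotientGroup.induction_on
      rename_i t
      obtain ⟨i, hi, hit⟩ := hcon (t : G)⁻¹ (inv_mem t.2)
      refine ⟨⟨i, hi⟩, ?_⟩
      change (((⟨t1, ht1S⟩ : S) ^ i : S) : S ⧸ (Cn y).subgroupOf S) = (t : S ⧸ (Cn y).subgroupOf S)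
      rw [eq_comm, QuotientGroup.eq, mem_subgroupOf]
      have h1 := hSN (pow_mem ht1S i)
      rw [mem_normalizer_iff'] at h1
      have h2 := (h1 ((t : G)⁻¹)).2 hit
      simpa using h2
    have h1 := Nat.card_le_card_of_surjective f hf
    rw [Nat.card_fin] at h1
    have h2 : (Cn y).relIndex S ≤ l := h1
    nlinarith
  obtain ⟨t2, ht2S, ht2⟩ := this
  let _ : CommGroup (Cn y) := { (inferInstance : Group (Cn y)) with
    mul_comm := fun a b => Subtype.ext (I.abel hyc a.2 b.2) }
  let φ := (Cn y).normalizerMonoidHom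
  have hφ1 : ∀ T : normalizer (Cn y : Set G), (T : G) ∈ Cn y → φ T = 1 := by
    intro T hT
    ext w
    change (T : G) * w * (T : G)⁻¹ = w
    rw [I.abel hyc hT w.2]; simp
  have hφ2 : ∀ T : normalizer (Cn y : Set G), (T : G) ∈ center G → φ T = 1 := fun T hT =>
    hφ1 T (center_le_Cn _ hT)
  have hnorm : ∀ T : normalizer (Cn y : Set G), (T : G) ∈ S → (T : G) ∉ Cn y → ∀ w : Cn y,
      ∏ k ∈ Finset.range l, (φ T ^ k) w ∈ (center G).subgroupOf (Cn y) := by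
    intro T hTS hTy w
    have hTl : φ T ^ l = 1 := by
      rw [← map_pow]
      exact hφ2 _ (hpow T hTS hTy)
    obtain ⟨ν, hν⟩ : ∃ ν, ν = ∏ k ∈ Finset.range l, (φ T ^ k) w := ⟨_, rfl⟩
    rw [← hν]
    have hfix : φ T ν = ν := by
      have h1 : φ T ν = ∏ k ∈ Finset.range l, (φ T ^ (k + 1)) w := by
        rw [hν, map_prod]
        refine Finset.prod_congr rfl fun k _ => ?_
        rw [pow_succ', MulAut.mul_apply]
      have h2 := Finset.prod_range_succ (fun k => (φ T ^ k) w) l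
      rw [Finset.prod_range_succ', ← h1, hTl] at h2
      simp only [pow_zero, MulAut.one_apply] at h2
      rw [hν]
      exact mul_right_cancel (hν ▸ h2)
    rw [mem_subgroupOf]
    by_contra hνc
    have e := I.TI hνc hyc (mem_Cn'.1 ν.2)
    apply hTy
    have := congrArg Subtype.val hfix
    rw [normHom_apply] at this
    exact e.le (mem_Cn.2 (mul_inv_eq_iff_eq_mul.1 this))
  let T1 : normalizer (Cn y : Set G) := ⟨t1, hSN ht1S⟩
  let T2 : normalizer (Cn y : Set G) := ⟨t2, hSN ht2S⟩
  have hcφ : Commute (φ T1) (φ T2) := by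
    have h1 : T1 * T2 = (T2 * T1) * ((T2 * T1)⁻¹ * (T1 * T2)) := (mul_inv_cancel_left _ _).symm
    have h2 : φ ((T2 * T1)⁻¹ * (T1 * T2)) = 1 := hφ1 _ (hcomm t1 ht1S t2 ht2S)
    change φ T1 * φ T2 = φ T2 * φ T1
    rw [← map_mul, ← map_mul, h1, map_mul, h2, mul_one]
  obtain ⟨l', hl', hln', hne⟩ := I.exists_other l
  obtain ⟨v, hv, hvl, hvc⟩ := I.exl hl' hln' hyc
  have key := norm_arg hl (φ T1) (φ T2) hcφ (by
      rw [← map_pow]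
      exact hφ2 _ (hpow t1 ht1S ht1)) ((center G).subgroupOf (Cn y))
    (hnorm T1 ht1S ht1) (fun i hi w => by
      have := hnorm (T1 ^ i * T2) (mul_mem (pow_mem ht1S i) ht2S) (ht2 i hi) w
      rwa [map_mul, map_pow] at this) ⟨v, hv⟩
  have key : v ^ l ∈ center G := key
  apply hvc
  -- v has order coprime to l
  have hcop : (orderOf v).Coprime l := (isP_coprime_prime hl hl' hne.symm hvl).symm
  obtain ⟨j, hj⟩ := exists_pow_eq_self_of_coprime hcop.symm
  rw [← hj]
  exact pow_mem key j

lemma normal [Finite G] (I : Ito G n q s) {g : G} (hg : g ∉ center G) : (Cn g).Normal := by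
  rw [← normalizer_eq_top_iff, ← index_eq_one]
  by_contra hne
  obtain ⟨l, hl, hld⟩ := Nat.exists_prime_and_dvd hne
  have h1 := relIndex_mul_index (le_normalizer : Cn g ≤ normalizer (Cn g : Set G))
  rw [← classSize_def, I.typ hg] at h1
  have hln : l ∣ n := h1 ▸ hld.mul_left _
  apply I.two_b hl
  rw [← h1, pow_two]
  exact mul_dvd_mul (I.two_a hl hln hg) hld

lemma false [Finite G] (I : Ito G n q s) : False := by
  obtain ⟨g, hg⟩ := I.ex
  have hgc : g ∉ center G := by
    rw [← classSize_eq_one, hg]; exact I.hn.ne'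
  have : ∃ h, h ∉ Cn g := by
    by_contra hcon
    push Not at hcon
    exact hgc (mem_center_iff_Cn.2 (eq_top_iff.2 fun x _ => hcon x))
  obtain ⟨h, hh⟩ := this
  have hhc : h ∉ center G := fun hc => hh (center_le_Cn g hc)
  have key : ∀ c, c ∈ Cn g → c ∈ Cn h → c ∈ center G := by
    intro c h1 h2
    by_contra hc
    have e1 := I.TI hc hgc (mem_Cn'.1 h1)
    have e2 := I.TI hc hhc (mem_Cn'.1 h2)
    apply hh
    rw [← e1, e2]
    exact self_mem_Cn h
  obtain ⟨a, ha, haq, hac⟩ := I.exl I.hq I.hqn hgc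
  obtain ⟨b, hb, hbs, hbc⟩ := I.exl I.hs I.hsn hhc
  have hd : a * b * a⁻¹ * b⁻¹ ∈ center G := by
    apply key
    · rw [mul_assoc a, mul_assoc a]
      exact mul_mem ha ((I.normal hgc).conj_mem _ (inv_mem ha) b)
    · exact mul_mem ((I.normal hhc).conj_mem _ hb a) (inv_mem hb)
  have hab := comm_of_central hd (by simp) (isP_coprime I.hq I.hs I.hqs haq hbs)
  have e1 := I.TI hac hgc (mem_Cn'.1 ha)
  have e2 := I.TI hbc hhc (mem_Cn'.1 hb)
  have e3 := I.TI hac hbc hab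
  apply hh
  rw [← e1, e3, e2]
  exact self_mem_Cn h

end Ito
end BF

namespace BF
open Subgroup
variable {G : Type*} [Group G]

lemma relIndex_eq_of_cover {H K L : Subgroup G} (hKL : K ≤ L)
    (h : ∀ c ∈ L, ∃ k ∈ K, k⁻¹ * c ∈ H) : H.relIndex K = H.relIndex L := by
  refine Nat.card_congr (Equiv.ofBijective (quotientSubgroupOfEmbeddingOfLE H hKL)
    ⟨(quotientSubgroupOfEmbeddingOfLE H hKL).injective, fun a => ?_⟩)
  induction a using QuotientGroup.induction_on
  rename_i c
  obtain ⟨k, hk, hkc⟩ := h c c.2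
  refine ⟨((⟨k, hk⟩ : K) : K ⧸ H.subgroupOf K), ?_⟩
  rw [quotientSubgroupOfEmbeddingOfLE_apply_mk, QuotientGroup.eq, mem_subgroupOf]
  exact hkc

lemma eq_one_of_comm {u v d : G} (hdu : Commute u d) (h : u * v * u⁻¹ = d * v)
    (ho : (orderOf d).Coprime (orderOf u)) : d = 1 := by
  have h2 : ∀ k : ℕ, u ^ k * v * (u ^ k)⁻¹ = d ^ k * v := by
    intro k
    induction k with
    | zero => simp
    | succ k ih =>
      calc u ^ (k + 1) * v * (u ^ (k + 1))⁻¹ = u * (u ^ k * v * (u ^ k)⁻¹) * u⁻¹ := by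
            rw [pow_succ']; simp [mul_assoc]
        _ = (u * d ^ k) * v * u⁻¹ := by rw [ih]; simp [mul_assoc]
        _ = d ^ k * (u * v * u⁻¹) := by
            rw [(hdu.pow_right k).eq]; simp [mul_assoc]
        _ = _ := by rw [h, ← mul_assoc, ← pow_succ]
  have h3 := h2 (orderOf u)
  rw [pow_orderOf_eq_one] at h3
  have h4 : d ^ orderOf u = 1 := by simpa using h3
  have h5 := Nat.dvd_gcd dvd_rfl (orderOf_dvd_of_pow_eq_one h4)
  rw [ho] at h5
  exact orderOf_eq_one_iff.1 (Nat.dvd_one.1 h5)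

namespace Hyp
variable {m n : ℕ}

lemma uniq [Finite G] (H : Hyp G m n) {x y : G} {p q s : ℕ} (hp : p.Prime) (hpm : p ∣ m)
    (hq : q.Prime) (hqn : q ∣ n) (hxp : IsPElement p x) (hyq : IsPElement q y)
    (hx : classSize x = m) (hy : classSize y = n) (hxy : Commute x y) (hs : s.Prime)
    (hsn : s ∣ n) : s = q := by
  by_contra hsq
  have hst := (H.step1 hp hpm hxp hx).1
  let K0 : Subgroup G := centralizer {t | IsPElement p t ∧ t ∈ Cn x}
  have hK : ∀ {k}, k ∈ K0 → ∀ t, IsPElement p t → t ∈ Cn x → Commute t k := fun hk t h1 h2 =>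
    (mem_centralizer_iff.1 hk) t ⟨h1, h2⟩
  have hKx : K0 ≤ Cn x := fun k hk => mem_Cn'.2 (hK hk x hxp (self_mem_Cn x)).symm
  have hK' : ∀ a ∈ Cn x, p.Coprime (orderOf a) → a ∈ K0 := fun a ha hao =>
    mem_centralizer_iff.2 fun t ht => hst t ht.2 a ha ht.1 hao
  have hcov : ∀ b ∈ Cn x, p.Coprime (orderOf b) → (Cn b).relIndex K0 = (Cn b).relIndex (Cn x) := by
    intro b hb hbo
    apply relIndex_eq_of_cover hKx
    intro c hc
    obtain ⟨u, w, hu, hw, hup, hwo, huw, rfl⟩ := exists_decomp hp c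
    have hux : u ∈ Cn x := zpowers_le.2 hc hu
    have hwx : w ∈ Cn x := zpowers_le.2 hc hw
    refine ⟨w, hK' w hwx hwo, ?_⟩
    rw [huw.eq, inv_mul_cancel_left]
    exact mem_Cn'.2 (hst u hux b hb hup hbo)
  have hpq : p ≠ q := fun e => H.not_both hp hpm (e ▸ hqn)
  have hrel : ∀ h ∈ K0, (Cn h).relIndex K0 = 1 ∨ (Cn h).relIndex K0 = n := by
    intro h hh
    obtain ⟨a, b, ha, hb, hap, hbo, hab, e⟩ := exists_decomp hp h
    have haK : a ∈ K0 := zpowers_le.2 hh ha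
    have hbK : b ∈ K0 := zpowers_le.2 hh hb
    have e1 : (Cn h).relIndex K0 = (Cn b).relIndex K0 := by
      rw [← inf_relIndex_right (Cn h), ← inf_relIndex_right (Cn b)]
      congr 1
      ext k
      constructor
      · rintro ⟨h1, h2⟩
        exact ⟨Cn_le_of_mem_zpowers hb h1, h2⟩
      · rintro ⟨h1, h2⟩
        refine ⟨?_, h2⟩
        change k ∈ Cn h
        rw [e, mem_Cn']
        exact (hK h2 a hap (hKx haK)).symm.mul_right (mem_Cn'.1 h1)
    rw [e1, hcov b (hKx hbK) hbo]
    exact H.rel_m hx (mem_Cn'.1 (hKx hbK)).symm (isP_coprime' hxp hbo)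
  have hyx : y ∈ Cn x := mem_Cn'.2 hxy.symm
  have hyo := isP_coprime_prime hp hq hpq hyq
  have hyK : y ∈ K0 := hK' y hyx hyo
  have hyr : (Cn y).relIndex K0 = n := by
    refine (hrel y hyK).resolve_left fun h1 => ?_
    rw [hcov y hyx hyo, relIndex_eq_one] at h1
    have := classSize_dvd_of_le h1
    rw [hx, hy] at this
    exact H.not_n_dvd_m this
  have I : Ito K0 n q s := {
    all := fun g => by rw [classSize_sub]; exact hrel g g.2
    ex := ⟨⟨y, hyK⟩, by rw [classSize_sub]; exact hyr⟩
    hn := H.hn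
    hq := hq
    hs := hs
    hqs := fun e => hsq e.symm
    hqn := hqn
    hsn := hsn }
  exact I.false

lemma sub_p [Finite G] (H : Hyp G m n) {y : G} {p q a b : ℕ} (hp : p.Prime) (hpm : p ∣ m)
    (hq : q.Prime) (hqn : q ∣ n) (hyq : IsPElement q y)
    (hy : classSize y = n) (hma : m = p ^ a) (hnb : n = q ^ b) :
    ∃ P : Subgroup G, ∀ t, t ∈ P ↔ IsPElement p t := by
  have hpq : p ≠ q := fun e => H.not_both hp hpm (e ▸ hqn)
  have hpn : ¬ p ∣ n := fun h => H.not_both hp hpm h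
  have hst := (H.swap.step1 hq hqn hyq hy).1
  have := Fact.mk hq
  -- p-elements and p-prime-elements of C(y) commute
  have hcom : ∀ u ∈ Cn y, IsPElement p u → ∀ g ∈ Cn y, p.Coprime (orderOf g) → g ∈ Cn u := by
    intro u hu hup g hg hgo
    apply mem_of_primary
    intro c hc r hr hcr
    have hcy : c ∈ Cn y := zpowers_le.2 hg hc
    by_cases hrq : r = q
    · subst hrq
      exact mem_Cn'.2 (hst c hcy u hu hcr (isP_coprime_prime hr hp hpq.symm hup))
    by_cases hrp : r = p
    · subst hrp
      have h1 : orderOf c ∣ orderOf g := orderOf_dvd_of_mem_zpowers hc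
      have h2 := isP_coprime' hcr (hgo.coprime_dvd_right h1)
      rw [Nat.coprime_self, orderOf_eq_one_iff] at h2
      rw [h2]; exact one_mem _
    · refine center_le_Cn u (H.central_of_not_dvd hr ?_ hcr)
      rw [hr.dvd_mul, hma, hnb]
      rintro (h | h)
      · exact hrp ((Nat.prime_dvd_prime_iff_eq hr hp).1 (hr.dvd_of_dvd_pow h))
      · exact hrq ((Nat.prime_dvd_prime_iff_eq hr hq).1 (hr.dvd_of_dvd_pow h))
  -- V
  obtain ⟨V, hV⟩ : ∃ V, V = normalClosure {y} := ⟨_, rfl⟩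
  have hVn : V.Normal := hV ▸ normalClosure_normal
  have hyV : y ∈ V := hV ▸ subset_normalClosure rfl
  have hVq : ∀ v ∈ V, IsPElement q v := by
    obtain ⟨S, hS, hSi⟩ := exists_sylow (G := G) hq
    obtain ⟨k, hk⟩ := conj_into_elt hq hSi hyq
    have hle : V ≤ S := by
      rw [hV, normalClosure, closure_le]
      intro w hw
      obtain ⟨y', hy', hw⟩ := Group.mem_conjugatesOfSet_iff.1 hw
      rw [Set.mem_singleton_iff.1 hy'] at hw
      obtain ⟨g, rfl⟩ := isConj_iff.1 hw
      obtain ⟨s, hs, c, hc, e⟩ := prod_of_coprime (H := Cn (k * y * k⁻¹)) (K := S) (by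
        rw [← classSize_def, classSize_conj, hy, hnb]
        exact Nat.Coprime.pow_left _ ((Nat.Prime.coprime_iff_not_dvd hq).2 hSi)) (g * k⁻¹)
      have e1 : g * y * g⁻¹ = s * (k * y * k⁻¹) * s⁻¹ := by
        have h1 : g * y * g⁻¹ = (g * k⁻¹) * (k * y * k⁻¹) * (g * k⁻¹)⁻¹ := by simp [mul_assoc]
        rw [h1, e, mul_assoc s c, mem_Cn.1 hc]
        simp [mul_assoc]
      rw [e1]
      exact mul_mem (mul_mem hs hk) (inv_mem hs)
    exact fun v hv => hS v (hle hv)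
  have hVp : IsPGroup q V := IsPGroup.iff_orderOf.2 (fun x => isP_coe.1 (hVq x x.2))
  have hnil : Group.IsNilpotent V := hVp.isNilpotent
  have hNC : NormalizerCondition V := Group.normalizerCondition_of_isNilpotent
  have claimA : ∀ u ∈ Cn y, IsPElement p u → V ≤ Cn u := by
    intro u hu hup
    by_contra hcon
    have hlt : (Cn u).subgroupOf V < ⊤ := by
      rw [lt_top_iff_ne_top, Ne, subgroupOf_eq_top]; exact hcon
    obtain ⟨v, hvN, hv⟩ := SetLike.exists_of_lt (hNC _ hlt)
    rw [mem_subgroupOf] at hv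
    obtain ⟨d, hd⟩ : ∃ d, d = u * (v : G) * u⁻¹ * (v : G)⁻¹ := ⟨_, rfl⟩
    have hdV : d ∈ V := by
      rw [hd]; exact mul_mem (hVn.conj_mem _ v.2 u) (inv_mem v.2)
    have hdy : d ∈ Cn y := by
      have h1 := (mem_normalizer_iff''.1 hvN ⟨y, hyV⟩).1 (by
        rw [mem_subgroupOf]; exact mem_Cn_comm.1 hu)
      rw [mem_subgroupOf] at h1
      have h1 : (v : G)⁻¹ * y * v ∈ Cn u := h1
      have h2 : ((v : G)⁻¹ * y * v) * u = u * ((v : G)⁻¹ * y * v) := mem_Cn.1 h1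
      have h3 : y * u = u * y := mem_Cn.1 (mem_Cn_comm.1 hu)
      have h4 : u⁻¹ * ((v : G)⁻¹ * y * v) = ((v : G)⁻¹ * y * v) * u⁻¹ := by
        rw [inv_mul_eq_iff_eq_mul, ← mul_assoc, eq_mul_inv_iff_mul_eq, h2]
      rw [mem_Cn, hd]
      calc u * (v : G) * u⁻¹ * (v : G)⁻¹ * y
          = u * v * (u⁻¹ * ((v : G)⁻¹ * y * v)) * (v : G)⁻¹ := by simp [mul_assoc]
        _ = (u * y) * (v * u⁻¹ * (v : G)⁻¹) := by rw [h4]; simp [mul_assoc]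
        _ = _ := by rw [← h3]; simp [mul_assoc]
    have hdu : Commute d u := hst d hdy u hu (hVq d hdV) (isP_coprime_prime hq hp hpq.symm hup)
    have hd1 := eq_one_of_comm (u := u) (d := d) (v := (v : G)) hdu.symm (by rw [hd]; simp)
      (isP_coprime hq hp hpq.symm (hVq d hdV) hup)
    apply hv
    rw [mem_Cn_comm, mem_Cn]
    rw [hd, mul_inv_eq_one, mul_inv_eq_iff_eq_mul] at hd1
    exact hd1
  have hall : ∀ u, IsPElement p u → u ∈ Cn y := by
    intro u hu
    obtain ⟨k, hk⟩ := conj_into_elt hp (H := Cn y) (by rw [← classSize_def, hy]; exact hpn) hu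
    have h1 := claimA _ hk (isP_conj k hu)
    have h2 : k⁻¹⁻¹ * y * k⁻¹ ∈ Cn (k * u * k⁻¹) := h1 (by
      have := hVn.conj_mem y hyV k
      simpa using this)
    rw [inv_inv, conj_mem_Cn] at h2
    exact mem_Cn_comm.1 h2
  obtain ⟨-, P, -, hP⟩ := D1_rel hp (L := Cn y) (by
    intro g hg hgo hd
    obtain ⟨S, hSy, hSp, hSi⟩ := exists_sylow_sub hp (Cn y)
    apply hSi
    refine hd.trans (relIndex_dvd_of_le_left _ ?_)
    intro u hu
    exact mem_Cn_comm.1 (hcom u (hSy hu) (hSp u hu) g hg hgo))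
  by_cases hPy : P ≤ Cn y
  · exact ⟨P, fun t => ⟨fun ht => (hP t (hPy ht)).1 ht, fun ht => (hP t (hall t ht)).2 ht⟩⟩
  · refine ⟨P ⊓ Cn y, fun t => ⟨fun ht => (hP t ht.2).1 ht.1, fun ht =>
      ⟨(hP t (hall t ht)).2 ht, hall t ht⟩⟩⟩

lemma main [Finite G] (H : Hyp G m n) : Group.IsNilpotent G ∧
      ∃ p q : ℕ, p.Prime ∧ q.Prime ∧ p ≠ q ∧ (∃ a : ℕ, m = p ^ a) ∧ ∃ b : ℕ, n = q ^ b := by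
  obtain ⟨x, y, p, q, hp, hpm, hq, hqn, hxp, hyq, hx, hy, hxy⟩ := H.caseC
  have hpq : p ≠ q := fun e => H.not_both hp hpm (e ▸ hqn)
  have hma : m = p ^ m.primeFactorsList.length :=
    Nat.eq_prime_pow_of_unique_prime_dvd H.mpos.ne' fun hs hsm =>
      H.swap.uniq hq hqn hp hpm hyq hxp hy hx hxy.symm hs hsm
  have hnb : n = q ^ n.primeFactorsList.length :=
    Nat.eq_prime_pow_of_unique_prime_dvd H.npos.ne' fun hs hsn =>
      H.uniq hp hpm hq hqn hxp hyq hx hy hxy hs hsn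
  refine ⟨?_, p, q, hp, hq, hpq, ⟨_, hma⟩, ⟨_, hnb⟩⟩
  have key : ∀ r : ℕ, r.Prime → ∃ P : Subgroup G, ∀ t, t ∈ P ↔ IsPElement r t := by
    intro r hr
    by_cases hrp : r = p
    · subst hrp
      exact H.sub_p hp hpm hq hqn hyq hy hma hnb
    by_cases hrq : r = q
    · subst hrq
      exact H.swap.sub_p hq hqn hp hpm hxp hx hnb hma
    have hc : ∀ t : G, IsPElement r t → t ∈ center G := fun t ht =>
      H.central_of_not_dvd hr (by
        rw [hr.dvd_mul]
        rintro (h | h)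
        · rw [hma] at h
          exact hrp ((Nat.prime_dvd_prime_iff_eq hr hp).1 (hr.dvd_of_dvd_pow h))
        · rw [hnb] at h
          exact hrq ((Nat.prime_dvd_prime_iff_eq hr hq).1 (hr.dvd_of_dvd_pow h))) ht
    exact ⟨{ carrier := {t | IsPElement r t}
             mul_mem' := fun {a b} ha hb => isP_mul hr ha hb ((mem_center_iff.1 (hc b hb)) a)
             one_mem' := isP_one r
             inv_mem' := fun h => isP_inv h }, fun t => Iff.rfl⟩
  refine ((Group.isNilpotent_of_finite_tfae (G := G)).out 0 3).2 ?_
  intro r hr S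
  obtain ⟨P, hP⟩ := key r hr.out
  have hPg : IsPGroup r P := IsPGroup.iff_orderOf.2 (fun x => isP_coe.1 ((hP x).1 x.2))
  have hle : (S : Subgroup G) ≤ P := fun t ht =>
    (hP t).2 (isP_coe.2 (IsPGroup.iff_orderOf.1 S.isPGroup' ⟨t, ht⟩) : IsPElement r ((⟨t, ht⟩ : (S : Subgroup G)) : G))
  rw [← S.is_maximal' hPg hle]
  exact ⟨fun t ht k => (hP _).2 (isP_conj k ((hP t).1 ht))⟩

end Hyp
end BF

/-- Beltrán–Felipe: if `N(G) = {1, m, n, mn}` with `m, n` coprime and greater than `1`,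
then `G` is nilpotent and `m` and `n` are powers of two distinct primes. -/
theorem beltran_felipe {G : Type*} [Group G] [Finite G] (m n : ℕ)
    (hm : 1 < m) (hn : 1 < n) (hmn : Nat.Coprime m n)
    (hN : {k : ℕ | ∃ x : G, classSize x = k} = {1, m, n, m * n}) :
    Group.IsNilpotent G ∧
      ∃ p q : ℕ, p.Prime ∧ q.Prime ∧ p ≠ q ∧ (∃ a : ℕ, m = p ^ a) ∧ ∃ b : ℕ, n = q ^ b := by
  have hmem : ∀ k : ℕ, (∃ x : G, classSize x = k) ↔ k = 1 ∨ k = m ∨ k = n ∨ k = m * n := by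
    intro k
    have := Set.ext_iff.1 hN k
    simpa using this
  have H : BF.Hyp G m n := {
    hm := hm
    hn := hn
    hmn := hmn
    all := fun g => (hmem _).1 ⟨g, rfl⟩
    em := (hmem _).2 (by simp)
    en := (hmem _).2 (by simp)
    emn := (hmem _).2 (by simp) }
  exact H.main
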